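/- arXiv:1002.1552 — 5 statements merged into one kernel-verified Lean document; each statement's English description precedes it below -/
import Mathlib

section
/- There exist absolute constants C₁, C₂ > 0 such that the following holds. Let G be an abelian group, let A ⊆ G be a finite set with |A| ≥ 2, let K ≥ 1 be a real number with |A + A| ≤ K|A|, and let η ∈ (0,1]. Then there is a finite set L ⊆ G such that |A ∩ Span(L)| ≥ K^{−C₁·exp(C₁/η)}·|A| and |L| ≤ C₂·K^{η}·log|A|. -/
open Pointwise

/-- The span of a finite set `L`: all sums `∑_{x ∈ L} σ_x • x` with `σ_x ∈ {-1,0,1}`. -/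
def Span {G : Type*} [AddCommGroup G] (L : Finset G) : Set G :=
  {y | ∃ σ : G → ℤ, (∀ x, σ x = -1 ∨ σ x = 0 ∨ σ x = 1) ∧ y = ∑ x ∈ L, σ x • x}

/-- The inclusion of `ℚ / ℤ` in the unit circle. -/
lemma exists_injective_ratAddCircle_toCircle :
    ∃ e : AddChar (AddCircle (1 : ℚ)) Circle, ∀ x, e x = 1 → x = 0 := by
  let f : AddCircle (1 : ℚ) →+ AddCircle (1 : ℝ) :=
    QuotientAddGroup.map _ _ (Rat.castHom ℝ).toAddMonoidHom (by
      rintro _ ⟨k, rfl⟩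
      exact ⟨k, by simp⟩)
  refine ⟨⟨fun x ↦ (f x).toCircle, by simp, fun x y ↦ by
    rw [map_add, AddCircle.toCircle_add]⟩, fun x hx ↦ ?_⟩
  have h : f x = 0 := AddCircle.injective_toCircle one_ne_zero <| by
    simpa using hx
  induction x using QuotientAddGroup.induction_on with
  | H q =>
    obtain ⟨k, hk⟩ := (QuotientAddGroup.eq_zero_iff (q : ℝ)).1 h
    refine (QuotientAddGroup.eq_zero_iff q).2 ⟨k, ?_⟩
    have : ((k : ℚ) : ℝ) = (q : ℝ) := by simpa using hk
    simpa using Rat.cast_injective this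

lemma exists_addChar_circle_finite_order {G : Type*} [AddCommGroup G] (y : G) :
    ∃ c : AddChar G Circle, (∀ x, 0 < orderOf (c x)) ∧ (c y = 1 → y = 0) := by
  obtain rfl | hy := eq_or_ne y 0
  · exact ⟨1, by simp⟩
  obtain ⟨e, he⟩ := exists_injective_ratAddCircle_toCircle
  obtain ⟨c, hc⟩ := CharacterModule.exists_character_apply_ne_zero_of_ne_zero hy
  let c' : G →+ AddCircle (1 : ℚ) := c
  refine ⟨e.compAddMonoidHom c', fun x ↦ ?_, fun h ↦ absurd (he _ h) hc⟩
  have hfin : IsOfFinAddOrder (c' x) := by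
    induction c' x using QuotientAddGroup.induction_on with
    | H q =>
      refine isOfFinAddOrder_iff_nsmul_eq_zero.2 ⟨q.den, q.den_pos, ?_⟩
      refine (QuotientAddGroup.eq_zero_iff (q.den • q)).2 ⟨q.num, ?_⟩
      simp
  obtain ⟨n, hn, h⟩ := isOfFinAddOrder_iff_nsmul_eq_zero.1 hfin
  refine orderOf_pos_iff.2 (isOfFinOrder_iff_pow_eq_one.2 ⟨n, hn, ?_⟩)
  rw [AddChar.compAddMonoidHom_apply, ← AddChar.map_nsmul_eq_pow, h, AddChar.map_zero_eq_one]

/-- On a finite subset of an abelian group, averaging over a suitable finite family of characters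
detects `0`. -/
lemma exists_finite_family_addChar_sum_eq_ite {G : Type*} [AddCommGroup G] [DecidableEq G]
    (F : Finset G) :
    ∃ (n d : ℕ) (χ : (Fin d → Fin n) → AddChar G Circle), 0 < n ∧
      ∀ x ∈ F, ∑ i, (χ i x : ℂ) = if x = 0 then (Fintype.card (Fin d → Fin n) : ℂ) else 0 := by
  choose c hc hc' using exists_addChar_circle_finite_order (G := G)
  let y : Fin F.card → G := fun k ↦ (F.equivFin.symm k : G)
  let n := ∏ k, ∏ x ∈ F, orderOf (c (y k) x)
  have hpow (k) {x} (hx : x ∈ F) : (c (y k) x) ^ n = 1 :=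
    orderOf_dvd_iff_pow_eq_one.1 <| (Finset.dvd_prod_of_mem _ hx).trans <|
      Finset.dvd_prod_of_mem (fun k ↦ ∏ x ∈ F, orderOf (c (y k) x)) (Finset.mem_univ k)
  refine ⟨n, F.card, fun i ↦ ∏ k, c (y k) ^ (i k : ℕ),
    Finset.prod_pos fun k _ ↦ Finset.prod_pos fun x _ ↦ hc _ _, fun x hx ↦ ?_⟩
  have key : ∑ i : Fin F.card → Fin n, (((∏ k, c (y k) ^ (i k : ℕ)) x : Circle) : ℂ) =
      ∏ k, ∑ j : Fin n, (c (y k) x : ℂ) ^ (j : ℕ) := by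
    rw [Finset.prod_univ_sum]
    refine Finset.sum_congr rfl fun i _ ↦ ?_
    rw [AddChar.prod_apply]
    exact map_prod Circle.coeHom _ _
  rw [key]
  split_ifs with h
  · subst h
    simp
  · obtain ⟨k, hk⟩ : ∃ k, y k = x := ⟨F.equivFin ⟨x, hx⟩, by simp [y]⟩
    refine Finset.prod_eq_zero (Finset.mem_univ k) ?_
    have hne : (c (y k) x : ℂ) ≠ 1 := fun h1 ↦
      h (by have := hc' (y k) (by rw [hk] at h1 ⊢; exact Circle.coe_eq_one.1 h1); rwa [hk] at this)
    rw [Fin.sum_univ_eq_sum_range (fun j ↦ (c (y k) x : ℂ) ^ j), geom_sum_eq hne,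
      ← Circle.coe_pow, hpow k hx]
    simp

section Riesz

variable {G I β : Type*} [AddCommGroup G]

lemma coe_addChar_sum (χ : AddChar G Circle) (t : Finset G) :
    (χ (∑ x ∈ t, x) : ℂ) = ∏ x ∈ t, (χ x : ℂ) := by
  classical
  induction t using Finset.induction_on with
  | empty => simp
  | insert x t hx ih =>
    rw [Finset.sum_insert hx, Finset.prod_insert hx, AddChar.map_add_eq_mul, Circle.coe_mul, ih]

lemma norm_sq_sum_mul_addChar (χ : AddChar G Circle) (J : Finset β) (f : β → ℝ) (g : β → G) :
    ((‖∑ j ∈ J, (f j : ℂ) * χ (g j)‖ ^ 2 : ℝ) : ℂ) =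
      ∑ j ∈ J, ∑ k ∈ J, (f j * f k : ℂ) * χ (g j - g k) := by
  rw [Complex.ofReal_pow, ← Complex.mul_conj', map_sum, Finset.sum_mul_sum]
  refine Finset.sum_congr rfl fun j _ ↦ Finset.sum_congr rfl fun k _ ↦ ?_
  rw [map_mul, Complex.conj_ofReal, AddChar.map_sub_eq_div, div_eq_mul_inv, Circle.coe_mul,
    Circle.coe_inv_eq_conj]
  ring

variable [Fintype I] [DecidableEq G] {χ : I → AddChar G Circle} {F : Finset G}

/-- Parseval's identity for a finite family of characters that detects `0` on the differences of
the frequencies. -/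
lemma sum_norm_sq_sum_mul_addChar
    (hχ : ∀ x ∈ F, ∑ i, (χ i x : ℂ) = if x = 0 then (Fintype.card I : ℂ) else 0)
    (J : Finset β) (f : β → ℝ) (g : β → G) (hg : Set.InjOn g J)
    (hF : ∀ j ∈ J, ∀ k ∈ J, g j - g k ∈ F) :
    ∑ i, ‖∑ j ∈ J, (f j : ℂ) * χ i (g j)‖ ^ 2 = Fintype.card I * ∑ j ∈ J, f j ^ 2 := by
  rw [← Complex.ofReal_inj, Complex.ofReal_sum]
  simp_rw [norm_sq_sum_mul_addChar]
  rw [Finset.sum_comm]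
  push_cast
  rw [Finset.mul_sum]
  refine Finset.sum_congr rfl fun j hj ↦ ?_
  rw [Finset.sum_comm, Finset.sum_eq_single_of_mem j hj]
  · rw [← Finset.mul_sum, hχ _ (hF j hj j hj), sub_self, if_pos rfl]
    ring
  · intro k hk hkj
    rw [← Finset.mul_sum, hχ _ (hF j hj k hk), if_neg, mul_zero]
    exact fun h ↦ hkj (hg hk hj (sub_eq_zero.1 h).symm)

lemma sum_norm_sq_mul_re_addChar
    (hχ : ∀ x ∈ F, ∑ i, (χ i x : ℂ) = if x = 0 then (Fintype.card I : ℂ) else 0)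
    (S : Finset G) (l : G) (hF : ∀ s ∈ S, ∀ t ∈ S, s - t + l ∈ F) :
    ∑ i, ‖∑ s ∈ S, (χ i s : ℂ)‖ ^ 2 * (χ i l : ℂ).re =
      Fintype.card I * ((S ∩ (l +ᵥ S)).card : ℝ) := by
  have hexp (i) :
      ((‖∑ s ∈ S, (χ i s : ℂ)‖ ^ 2 : ℝ) : ℂ) = ∑ s ∈ S, ∑ t ∈ S, (χ i (s - t) : ℂ) := by
    simpa using norm_sq_sum_mul_addChar (χ i) S (fun _ ↦ 1) id
  have key : ∑ i, ((‖∑ s ∈ S, (χ i s : ℂ)‖ ^ 2 : ℝ) : ℂ) * χ i l =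
      Fintype.card I * ((S ∩ (l +ᵥ S)).card : ℂ) := by
    simp_rw [hexp, Finset.sum_mul, ← Circle.coe_mul, ← AddChar.map_add_eq_mul]
    rw [Finset.sum_comm]
    simp_rw [Finset.sum_comm (s := Finset.univ)]
    rw [Finset.sum_comm]
    have (t) (ht : t ∈ S) : ∑ s ∈ S, ∑ i, (χ i (s - t + l) : ℂ) =
        if t ∈ S ∩ (l +ᵥ S) then (Fintype.card I : ℂ) else 0 := by
      rw [Finset.sum_congr rfl fun s hs ↦ hχ _ (hF s hs t ht)]
      have h (s : G) : s - t + l = 0 ↔ s = t - l := by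
        rw [← sub_eq_zero (b := t - l)]; abel_nf
      have hmem : t ∈ S ∩ (l +ᵥ S) ↔ t - l ∈ S := by
        simp [ht, Finset.mem_vadd_finset, ← sub_eq_iff_eq_add', eq_comm]
      simp only [h, hmem, Finset.sum_ite_eq']
    rw [Finset.sum_congr rfl this, Finset.sum_ite_mem, Finset.inter_eq_right.2
      Finset.inter_subset_left]
    simp [mul_comm]
  have := congrArg Complex.re key
  rw [Complex.re_sum] at this
  simp only [Complex.re_ofReal_mul] at this
  rw [this]
  norm_cast

end Riesz

lemma exp_two_mul_sub_le {a x : ℝ} (ha : 0 ≤ a) (ha' : a ≤ 1 / 20) (hx : |x| ≤ 1) :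
    Real.exp (2 * a * x - 4 * a ^ 2) ≤ 1 + a ^ 2 + 2 * a * x := by
  obtain ⟨h1, h2⟩ := abs_le.1 hx
  have hz : |2 * a * x - 4 * a ^ 2| ≤ 11 / 5 * a := by
    rw [abs_le]; constructor <;> nlinarith
  have hb := (abs_le.1 (Real.abs_exp_sub_one_sub_id_le (hz.trans (by linarith)))).2
  have hsq : (2 * a * x - 4 * a ^ 2) ^ 2 ≤ (11 / 5 * a) ^ 2 :=
    sq_le_sq' (abs_le.1 hz).1 (abs_le.1 hz).2
  nlinarith [sq_nonneg a]

lemma norm_sq_one_add_mul_circle (a : ℝ) (z : Circle) :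
    ‖1 + (a : ℂ) * z‖ ^ 2 = 1 + a ^ 2 + 2 * a * (z : ℂ).re := by
  have hz := Circle.normSq_coe z
  rw [Complex.normSq_apply] at hz
  rw [Complex.sq_norm, Complex.normSq_apply]
  simp
  linear_combination a ^ 2 * hz

/-- A dissociated set of translations under each of which `S` has a proportion at least `τ` of its
elements in common with its translate has size `O(τ⁻² log |S|)`. -/
lemma card_le_of_addDissociated {G : Type*} [AddCommGroup G] [DecidableEq G] {S D : Finset G}
    {τ : ℝ} (hS : S.Nonempty) (hD : AddDissociated (D : Set G)) (hτ : 0 < τ) (hτ' : τ ≤ 1)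
    (h : ∀ l ∈ D, τ * S.card ≤ ((S ∩ (l +ᵥ S)).card : ℝ)) :
    (D.card : ℝ) ≤ 12 / τ ^ 2 * Real.log S.card := by
  let U := D.powerset.image fun t ↦ ∑ x ∈ t, x
  obtain ⟨n, d, χ, hn, hχ⟩ := exists_finite_family_addChar_sum_eq_ite
    ((S - S) ∪ (S - S + D) ∪ (U - U))
  set N : ℝ := ((Fintype.card (Fin d → Fin n) : ℕ) : ℝ) with hN
  have hNpos : 0 < N := by rw [hN]; simp; positivity
  set a : ℝ := τ / 20 with ha
  have hScard : (0 : ℝ) < S.card := by exact_mod_cast hS.card_pos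
  set w : (Fin d → Fin n) → ℝ := fun i ↦ ‖∑ s ∈ S, (χ i s : ℂ)‖ ^ 2 with hw
  set R : (Fin d → Fin n) → ℝ := fun i ↦ ‖∏ l ∈ D, (1 + (a : ℂ) * χ i l)‖ ^ 2 with hR
  have hw_sum : ∑ i, w i = N * S.card := by
    have := sum_norm_sq_sum_mul_addChar hχ S (fun _ ↦ 1) id Function.injective_id.injOn
      (fun j hj k hk ↦ by simp [Finset.sub_mem_sub hj hk])
    simpa [hN, hw] using this
  have hw_re (l) (hl : l ∈ D) : N * (τ * S.card) ≤ ∑ i, w i * (χ i l : ℂ).re := by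
    rw [sum_norm_sq_mul_re_addChar hχ S l fun s hs t ht ↦ by
      simp [Finset.add_mem_add (Finset.sub_mem_sub hs ht) hl]]
    exact mul_le_mul_of_nonneg_left (h l hl) hNpos.le
  have hw_le (i) : w i ≤ (S.card : ℝ) ^ 2 := by
    refine pow_le_pow_left₀ (norm_nonneg _) ((norm_sum_le _ _).trans_eq ?_) 2
    simp_rw [Circle.norm_coe]
    simp
  have hR_sum : ∑ i, R i = N * (1 + a ^ 2) ^ D.card := by
    have := sum_norm_sq_sum_mul_addChar hχ D.powerset (fun t ↦ a ^ t.card) (fun t ↦ ∑ x ∈ t, x)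
      (fun t ht u hu htu ↦ hD (by simpa using ht) (by simpa using hu) htu) fun t ht u hu ↦ by
        simp only [Finset.mem_union]
        exact Or.inr (Finset.sub_mem_sub (Finset.mem_image_of_mem _ ht)
          (Finset.mem_image_of_mem _ hu))
    have h2 : ∑ t ∈ D.powerset, (a ^ t.card) ^ 2 = (1 + a ^ 2) ^ D.card := by
      rw [← Finset.prod_const, Finset.prod_one_add]
      simp [← pow_mul, mul_comm]
    rw [h2] at this
    rw [← this]
    refine Finset.sum_congr rfl fun i _ ↦ ?_
    simp only [hR]
    rw [Finset.prod_one_add]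
    congr 2
    refine Finset.sum_congr rfl fun t _ ↦ ?_
    rw [Finset.prod_mul_distrib, Finset.prod_const, coe_addChar_sum]
    push_cast
    rfl
  set c : ℝ := (2 * a * τ - 4 * a ^ 2) * D.card with hc
  set z : (Fin d → Fin n) → ℝ := fun i ↦ ∑ l ∈ D, (2 * a * (χ i l : ℂ).re - 4 * a ^ 2) with hz
  have hR_ge (i) : Real.exp c * (1 + z i - c) ≤ R i := by
    calc Real.exp c * (1 + z i - c) ≤ Real.exp c * Real.exp (z i - c) := by
          gcongr
          linarith [Real.add_one_le_exp (z i - c)]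
      _ = Real.exp (z i) := by rw [← Real.exp_add]; congr 1; ring
      _ ≤ R i := by
          simp only [hz, hR]
          rw [Real.exp_sum, norm_prod, ← Finset.prod_pow]
          refine Finset.prod_le_prod (fun _ _ ↦ (Real.exp_pos _).le) fun l _ ↦ ?_
          rw [norm_sq_one_add_mul_circle]
          refine exp_two_mul_sub_le (by positivity) (by linarith) ?_
          exact (Complex.abs_re_le_norm _).trans_eq (Circle.norm_coe _)
  have hwz : c * (N * S.card) ≤ ∑ i, w i * z i := by
    have : ∑ i, w i * z i =
        ∑ l ∈ D, (2 * a * ∑ i, w i * (χ i l : ℂ).re - 4 * a ^ 2 * ∑ i, w i) := by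
      simp only [hz, Finset.mul_sum, ← Finset.sum_sub_distrib]
      rw [Finset.sum_comm]
      exact Finset.sum_congr rfl fun l _ ↦ Finset.sum_congr rfl fun i _ ↦ by ring
    rw [this, hw_sum]
    calc c * (N * S.card)
        = ∑ l ∈ D, (2 * a * (N * (τ * S.card)) - 4 * a ^ 2 * (N * S.card)) := by
          rw [Finset.sum_const, nsmul_eq_mul, hc]; ring
      _ ≤ _ := Finset.sum_le_sum fun l hl ↦ by
          have := hw_re l hl
          gcongr
  have hmain : Real.exp c * (N * S.card) ≤ (S.card : ℝ) ^ 2 * (N * (1 + a ^ 2) ^ D.card) := by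
    calc Real.exp c * (N * S.card)
        ≤ Real.exp c * ((1 - c) * ∑ i, w i + ∑ i, w i * z i) := by
          gcongr
          rw [hw_sum]; linarith
      _ = ∑ i, w i * (Real.exp c * (1 + z i - c)) := by
          rw [Finset.mul_sum, ← Finset.sum_add_distrib, Finset.mul_sum]
          exact Finset.sum_congr rfl fun i _ ↦ by ring
      _ ≤ ∑ i, (S.card : ℝ) ^ 2 * R i := Finset.sum_le_sum fun i _ ↦
          (mul_le_mul_of_nonneg_left (hR_ge i) (by positivity)).trans
            (mul_le_mul_of_nonneg_right (hw_le i) (by positivity))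
      _ = _ := by rw [← Finset.mul_sum, hR_sum]
  have hexp : Real.exp c ≤ S.card * Real.exp (a ^ 2 * D.card) := by
    have h1 : (1 + a ^ 2) ^ D.card ≤ Real.exp (a ^ 2 * D.card) := by
      rw [mul_comm, Real.exp_nat_mul]
      gcongr
      linarith [Real.add_one_le_exp (a ^ 2)]
    refine le_trans ?_ (mul_le_mul_of_nonneg_left h1 hScard.le)
    refine le_of_mul_le_mul_right (hmain.trans_eq ?_) (mul_pos hNpos hScard)
    ring
  have hlog : c ≤ Real.log S.card + a ^ 2 * D.card := by
    have := Real.log_le_log (Real.exp_pos _) hexp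
    rwa [Real.log_exp, Real.log_mul hScard.ne' (Real.exp_pos _).ne', Real.log_exp] at this
  rw [div_mul_eq_mul_div, le_div_iff₀ (by positivity)]
  rw [hc, ha] at hlog
  have : 0 ≤ (D.card : ℝ) * τ ^ 2 := by positivity
  nlinarith

section Span

variable {G : Type*} [AddCommGroup G] [DecidableEq G]

lemma sum_sub_sum_mem_Span {t u L : Finset G} (ht : t ⊆ L) (hu : u ⊆ L) :
    ∑ x ∈ t, x - ∑ x ∈ u, x ∈ Span L := by
  refine ⟨fun x ↦ (if x ∈ t then 1 else 0) - if x ∈ u then 1 else 0, fun x ↦ ?_, ?_⟩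
  · by_cases x ∈ t <;> by_cases x ∈ u <;> simp [*]
  · simp [sub_smul, ite_smul, Finset.inter_eq_right.2 ht, Finset.inter_eq_right.2 hu]

/-- A finite set is contained in the span of a dissociated subset. -/
lemma exists_addDissociated_subset_Span (Q : Finset G) :
    ∃ L ⊆ Q, AddDissociated (L : Set G) ∧ (Q : Set G) ⊆ Span L := by
  classical
  obtain ⟨L, hL⟩ := (Q.powerset.filter fun L : Finset G ↦ AddDissociated (L : Set G)).exists_maximal
    ⟨∅, by simp⟩
  simp only [Finset.mem_filter, Finset.mem_powerset] at hL
  refine ⟨L, hL.1.1, hL.1.2, fun a ha ↦ ?_⟩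
  by_cases haL : a ∈ L
  · simpa using sum_sub_sum_mem_Span (Finset.singleton_subset_iff.2 haL) (Finset.empty_subset L)
  obtain ⟨t, u, ht, hu, hdisj, hne, hsum⟩ := not_addDissociated_iff_exists_disjoint.1 fun h ↦
    hL.not_gt ⟨Finset.insert_subset ha hL.1.1, h⟩ (Finset.ssubset_insert haL)
  rw [Finset.coe_subset] at ht hu
  by_cases hat : a ∈ t
  · have : a = ∑ x ∈ u, x - ∑ x ∈ t.erase a, x := by
      rw [Finset.sum_erase_eq_sub hat, hsum, sub_sub_cancel]
    rw [this]
    exact sum_sub_sum_mem_Span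
      ((Finset.subset_insert_iff_of_notMem (Finset.disjoint_left.1 hdisj hat)).1 hu)
      (Finset.subset_insert_iff.1 ht)
  rw [Finset.subset_insert_iff_of_notMem hat] at ht
  by_cases hau : a ∈ u
  · have : a = ∑ x ∈ t, x - ∑ x ∈ u.erase a, x := by
      rw [Finset.sum_erase_eq_sub hau, hsum, sub_sub_cancel]
    rw [this]
    exact sum_sub_sum_mem_Span ht (Finset.subset_insert_iff.1 hu)
  · rw [Finset.subset_insert_iff_of_notMem hau] at hu
    exact absurd hL.1.2 (not_addDissociated_iff_exists_disjoint.2 ⟨t, u, ht, hu, hdisj, hne, hsum⟩)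

/-- If every difference `x - b` with `x ∈ Q` is a `τ`-almost period of `S`, then `Q` is contained
in the span of `O(τ⁻² log |S|)` elements. -/
lemma exists_subset_Span_of_almost_period {S Q : Finset G} {τ : ℝ} (b : G) (hS : S.Nonempty)
    (hτ : 0 < τ) (hτ' : τ ≤ 1)
    (h : ∀ x ∈ Q, τ * S.card ≤ ((S ∩ ((x - b) +ᵥ S)).card : ℝ)) :
    ∃ L : Finset G, (Q : Set G) ⊆ Span L ∧
      (L.card : ℝ) ≤ 48 / τ ^ 2 * Real.log (2 * S.card) := by
  obtain ⟨L, hLQ, hL, hQL⟩ := exists_addDissociated_subset_Span Q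
  refine ⟨L, hQL, ?_⟩
  let T := S ∪ (b +ᵥ S)
  have hT : T.Nonempty := hS.mono Finset.subset_union_left
  have hTcard : (T.card : ℝ) ≤ 2 * S.card := by
    have := Finset.card_union_le S (b +ᵥ S)
    rw [Finset.card_vadd_finset] at this
    exact_mod_cast this.trans_eq (two_mul _).symm
  have hperiod (x) (hx : x ∈ L) : τ / 2 * T.card ≤ ((T ∩ (x +ᵥ T)).card : ℝ) := by
    have hsub : b +ᵥ (S ∩ ((x - b) +ᵥ S)) ⊆ T ∩ (x +ᵥ T) := by
      rw [Finset.vadd_finset_inter, vadd_vadd, add_sub_cancel]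
      exact Finset.inter_subset_inter Finset.subset_union_right
        (Finset.vadd_finset_subset_vadd_finset Finset.subset_union_left)
    have hcard := Finset.card_le_card hsub
    rw [Finset.card_vadd_finset] at hcard
    calc τ / 2 * T.card ≤ τ / 2 * (2 * S.card) := by gcongr
      _ = τ * S.card := by ring
      _ ≤ _ := (h x (hLQ hx)).trans (by exact_mod_cast hcard)
  have hTpos : (0 : ℝ) < T.card := by exact_mod_cast hT.card_pos
  refine (card_le_of_addDissociated hT hL (half_pos hτ) (by linarith) hperiod).trans ?_
  rw [show 12 / (τ / 2) ^ 2 = 48 / τ ^ 2 by field_simp; norm_num]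
  gcongr

/-- Some translate of `B` meets the set of popular differences of `B` in at least half of its
elements. -/
lemma exists_half_popular_sub {B : Finset G} {M : ℝ} (hB : B.Nonempty) (hM : 0 < M)
    (hBM : ((B - B).card : ℝ) ≤ M) :
    ∃ b ∈ B, (B.card : ℝ) / 2 ≤ ((B.filter fun x ↦
      (B.card : ℝ) ^ 2 ≤ 2 * M * (B ∩ ((x - b) +ᵥ B)).card).card : ℝ) := by
  by_contra! hcon
  let bad := (B ×ˢ B).filter fun p : G × G ↦
    ¬ (B.card : ℝ) ^ 2 ≤ 2 * M * (B ∩ ((p.1 - p.2) +ᵥ B)).card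
  have hBpos : (0 : ℝ) < B.card := by exact_mod_cast hB.card_pos
  have hlow : (B.card : ℝ) * (B.card / 2) < bad.card := by
    have hsum : bad.card = ∑ b ∈ B, (B.filter fun x ↦
        ¬ (B.card : ℝ) ^ 2 ≤ 2 * M * (B ∩ ((x - b) +ᵥ B)).card).card := by
      simp only [bad, Finset.card_filter, Finset.sum_product_right]
    rw [hsum, Nat.cast_sum, ← nsmul_eq_mul, ← Finset.sum_const]
    refine Finset.sum_lt_sum_of_nonempty hB fun b hb ↦ ?_
    have h1 := hcon b hb
    have h2 := Finset.card_filter_add_card_filter_not (s := B) (fun x ↦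
      (B.card : ℝ) ^ 2 ≤ 2 * M * (B ∩ ((x - b) +ᵥ B)).card)
    have h3 : ((_ + _ : ℕ) : ℝ) = _ := congrArg Nat.cast h2
    push_cast at h3
    linarith
  have hupp : (bad.card : ℝ) * (2 * M) ≤ (B - B).card * (B.card : ℝ) ^ 2 := by
    have hmaps : ∀ p ∈ bad, p.1 - p.2 ∈ B - B := fun p hp ↦ by
      have := Finset.mem_product.1 (Finset.mem_filter.1 hp).1
      exact Finset.sub_mem_sub this.1 this.2
    rw [Finset.card_eq_sum_card_fiberwise hmaps, Nat.cast_sum, Finset.sum_mul, ← nsmul_eq_mul,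
      ← Finset.sum_const]
    refine Finset.sum_le_sum fun s _ ↦ ?_
    obtain hemp | ⟨p, hp⟩ := (bad.filter fun p ↦ p.1 - p.2 = s).eq_empty_or_nonempty
    · rw [hemp]; simp
    have hs := (Finset.mem_filter.1 (Finset.mem_filter.1 hp).1).2
    rw [(Finset.mem_filter.1 hp).2, not_le] at hs
    have hinj : (bad.filter fun p ↦ p.1 - p.2 = s).card ≤ (B ∩ (s +ᵥ B)).card := by
      refine Finset.card_le_card_of_injOn Prod.fst (fun q hq ↦ ?_) fun q hq r hr hqr ↦ ?_
      · obtain ⟨hbad, rfl⟩ := Finset.mem_filter.1 hq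
        have := Finset.mem_product.1 (Finset.mem_filter.1 hbad).1
        refine Finset.mem_inter.2 ⟨this.1, Finset.mem_vadd_finset.2 ⟨q.2, this.2, ?_⟩⟩
        simp
      · have h1 := (Finset.mem_filter.1 hq).2
        have h2 := (Finset.mem_filter.1 hr).2
        rw [← h2, hqr] at h1
        exact Prod.ext hqr (sub_right_injective h1)
    have hinj' : ((bad.filter fun p ↦ p.1 - p.2 = s).card : ℝ) ≤ (B ∩ (s +ᵥ B)).card := by
      exact_mod_cast hinj
    nlinarith [mul_le_mul_of_nonneg_right hinj' hM.le]
  nlinarith [mul_le_mul_of_nonneg_right hBM (sq_nonneg (B.card : ℝ))]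

lemma card_sub_self_le {A : Finset G} {K : ℝ} (hA : A.Nonempty)
    (hK : ((A + A).card : ℝ) ≤ K * A.card) : ((A - A).card : ℝ) ≤ K ^ 2 * A.card := by
  have hpos : (0 : ℝ) < A.card := by exact_mod_cast hA.card_pos
  have h : ((A - A).card : ℝ) * A.card ≤ (A + A).card * (A + A).card := by
    exact_mod_cast Finset.ruzsa_triangle_inequality_sub_add_add A A A
  refine le_of_mul_le_mul_right (h.trans ?_) hpos
  have h0 : 0 ≤ K * A.card := (Nat.cast_nonneg _).trans hK
  calc ((A + A).card : ℝ) * (A + A).card ≤ (K * A.card) * (K * A.card) := by gcongr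
    _ = _ := by ring

lemma add_inter_vadd_subset (A B : Finset G) (s : G) :
    A + (B ∩ (s +ᵥ B)) ⊆ (A + B) ∩ (s +ᵥ (A + B)) := by
  refine Finset.subset_inter (Finset.add_subset_add_left Finset.inter_subset_left) ?_
  rw [← add_vadd_comm]
  exact Finset.add_subset_add_left Finset.inter_subset_right

lemma log_two_mul_card_add_le {A B : Finset G} (hA : 2 ≤ A.card) (hB : B.Nonempty) (hBA : B ⊆ A) :
    Real.log (2 * (A + B).card) ≤ 3 * Real.log A.card := by
  have hne : (A + B).Nonempty := (Finset.card_pos.1 (by omega)).add hB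
  have hpos : (0 : ℝ) < (A + B).card := by exact_mod_cast hne.card_pos
  have h : 2 * (A + B).card ≤ A.card ^ 3 := by
    calc 2 * (A + B).card ≤ A.card * (A.card * A.card) :=
          Nat.mul_le_mul hA (Finset.card_add_le.trans
            (Nat.mul_le_mul_left _ (Finset.card_le_card hBA)))
      _ = _ := by ring
  have h' : (2 * (A + B).card : ℝ) ≤ A.card ^ 3 := by exact_mod_cast h
  have := Real.log_le_log (by positivity) h'
  rwa [Real.log_pow] at this

end Span

lemma two_pow_le_exp_three_div {i : ℕ} {η : ℝ} (hη : 0 < η) (hi : (i : ℝ) * η ≤ 2) :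
    (2 : ℝ) ^ i ≤ Real.exp (3 / η) := by
  have h1 : (2 : ℝ) ^ i ≤ Real.exp i := by
    rw [← mul_one (i : ℝ), Real.exp_nat_mul]
    gcongr
    linarith [Real.add_one_le_exp 1]
  have h2 : (i : ℝ) ≤ 3 / η := by
    rw [le_div_iff₀ hη]; linarith
  exact h1.trans (Real.exp_le_exp.2 h2)

section Iteration

variable {G : Type*} [AddCommGroup G] [DecidableEq G]

/-- A large subset `B` of `A` such that passing to `B ∩ (s + B)`, for popular `s`, does not shrink
the sumset with `A` by a factor more than `K ^ (η / 2)`. -/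
lemma exists_subset_stable_sumset {A : Finset G} {K η : ℝ} (hA : A.Nonempty) (hK : 2 ≤ K)
    (hAK : ((A + A).card : ℝ) ≤ K * A.card) (hη : 0 < η) :
    ∃ (i : ℕ) (B : Finset G), (i : ℝ) * η ≤ 2 ∧ B ⊆ A ∧ B.Nonempty ∧
      K ^ (-(3 * ((2 : ℝ) ^ i - 1))) * A.card ≤ B.card ∧
      ∀ s : G, (B.card : ℝ) ^ 2 ≤ 2 * (K ^ 2 * A.card) * (B ∩ (s +ᵥ B)).card →
        K ^ (-(η / 2)) * (A + B).card ≤ (A + (B ∩ (s +ᵥ B))).card := by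
  have hK0 : 0 < K := by linarith
  have hApos : (0 : ℝ) < A.card := by exact_mod_cast hA.card_pos
  let p (i : ℕ) : Prop := ∃ B ⊆ A, B.Nonempty ∧
    K ^ (-(3 * ((2 : ℝ) ^ i - 1))) * A.card ≤ B.card ∧
    ((A + B).card : ℝ) ≤ K ^ (1 - i * (η / 2)) * A.card
  have hp0 : p 0 := ⟨A, subset_rfl, hA, by simp, by simpa using hAK⟩
  have hp_le (i) (hi : p i) : (i : ℝ) * η ≤ 2 := by
    obtain ⟨B, -, hB, -, h⟩ := hi
    have h1 : (A.card : ℝ) ≤ (A + B).card := by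
      exact_mod_cast Finset.card_le_card_add_right hB
    have h2 : 1 ≤ K ^ (1 - i * (η / 2)) := by
      refine le_of_mul_le_mul_right ?_ hApos
      linarith
    by_contra! hlt
    exact absurd h2 (not_le.2 (Real.rpow_lt_one_of_one_lt_of_neg (by linarith) (by linarith)))
  obtain ⟨i, hi, hi'⟩ : ∃ i, p i ∧ ¬ p (i + 1) := by
    by_contra! hcon
    have hall (i) : p i := Nat.rec hp0 (fun i hi ↦ hcon i hi) i
    obtain ⟨n, hn⟩ := exists_nat_gt (2 / η)
    rw [div_lt_iff₀ hη] at hn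
    exact absurd (hp_le n (hall n)) (not_le.2 hn)
  obtain ⟨B, hBA, hB, hBcard, hAB⟩ := hi
  refine ⟨i, B, hp_le i ⟨B, hBA, hB, hBcard, hAB⟩, hBA, hB, hBcard, fun s hs ↦ ?_⟩
  have hBpos : (0 : ℝ) < B.card := by exact_mod_cast hB.card_pos
  have hpop : (0 : ℝ) < (B ∩ (s +ᵥ B)).card := by
    by_contra! h
    have := mul_nonpos_of_nonneg_of_nonpos (show 0 ≤ 2 * (K ^ 2 * A.card) by positivity) h
    nlinarith
  by_contra! hlt
  refine hi' ⟨B ∩ (s +ᵥ B), Finset.inter_subset_left.trans hBA,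
    Finset.card_pos.1 (by exact_mod_cast hpop), ?_, hlt.le.trans ?_⟩
  · set q := K ^ (-(3 * ((2 : ℝ) ^ i - 1))) with hq
    have hexp : K ^ (-(3 * ((2 : ℝ) ^ (i + 1) - 1))) * K ^ 3 = q ^ 2 := by
      rw [hq, ← Real.rpow_natCast K, ← Real.rpow_natCast (K ^ _), ← Real.rpow_add hK0,
        ← Real.rpow_mul hK0.le]
      congr 1
      push_cast
      ring
    have hsq : (q * A.card) ^ 2 ≤ (B.card : ℝ) ^ 2 := by
      have : 0 ≤ q * A.card := by positivity
      gcongr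
    have hchain : (q * A.card) ^ 2 ≤ K ^ 3 * A.card * (B ∩ (s +ᵥ B)).card := by
      refine (hsq.trans hs).trans ?_
      have : 2 * K ^ 2 ≤ K ^ 3 := by nlinarith [sq_nonneg K]
      calc _ = 2 * K ^ 2 * A.card * (B ∩ (s +ᵥ B)).card := by ring
        _ ≤ _ := by gcongr
    refine le_of_mul_le_mul_left ?_ (show 0 < K ^ 3 * A.card by positivity)
    refine Eq.trans_le ?_ hchain
    rw [mul_pow, ← hexp]
    ring
  · calc K ^ (-(η / 2)) * (A + B).card
        ≤ K ^ (-(η / 2)) * (K ^ (1 - i * (η / 2)) * A.card) := by gcongr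
      _ = K ^ (1 - ((i + 1 : ℕ) : ℝ) * (η / 2)) * A.card := by
        rw [← mul_assoc, ← Real.rpow_add hK0]
        congr 2
        push_cast
        ring

end Iteration

theorem structure_in_sets_with_logarithmic_doubling :
    ∃ C₁ C₂ : ℝ, 0 < C₁ ∧ 0 < C₂ ∧
      ∀ (G : Type) [AddCommGroup G] [DecidableEq G] (A : Finset G) (K η : ℝ),
        2 ≤ A.card → 1 ≤ K → ((A + A).card : ℝ) ≤ K * A.card → 0 < η → η ≤ 1 →
        ∃ L : Finset G,
          K ^ (-(C₁ * Real.exp (C₁ / η))) * A.card ≤ ((↑A ∩ Span L).ncard : ℝ) ∧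
          (L.card : ℝ) ≤ C₂ * K ^ η * Real.log A.card := by
  refine ⟨3, 576, by norm_num, by norm_num, fun G _ _ A K η hA hK hAK hη hη' ↦ ?_⟩
  have hAne : A.Nonempty := Finset.card_pos.1 (by omega)
  have hApos : (0 : ℝ) < A.card := by exact_mod_cast hAne.card_pos
  have hlog : 0 ≤ Real.log A.card := Real.log_natCast_nonneg _
  have hK0 : 0 < K := by linarith
  obtain hK2 | hK2 := le_total K 2
  · obtain ⟨b, hb⟩ := id hAne
    obtain ⟨L, hL, hcard⟩ := exists_subset_Span_of_almost_period (S := A + A) (Q := A) (τ := 1 / 2)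
      b (hAne.add hAne) (by norm_num) (by norm_num) fun x hx ↦ by
        have hne : (A ∩ ((x - b) +ᵥ A)).Nonempty :=
          ⟨x, Finset.mem_inter.2 ⟨hx, Finset.mem_vadd_finset.2 ⟨b, hb, by simp⟩⟩⟩
        have h1 := (Finset.card_le_card_add_right (s := A) hne).trans
          (Finset.card_le_card (add_inter_vadd_subset A A (x - b)))
        have h2 : (A.card : ℝ) ≤ ((A + A) ∩ ((x - b) +ᵥ (A + A))).card := by exact_mod_cast h1
        nlinarith
    refine ⟨L, ?_, hcard.trans ?_⟩
    · rw [Set.inter_eq_left.2 hL, Set.ncard_coe_finset]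
      refine mul_le_of_le_one_left hApos.le (Real.rpow_le_one_of_one_le_of_nonpos hK ?_)
      have := Real.exp_pos (3 / η)
      linarith
    · have h1 := log_two_mul_card_add_le hA hAne subset_rfl
      have h2 : 1 ≤ K ^ η := Real.one_le_rpow hK hη.le
      nlinarith [mul_le_mul_of_nonneg_right h2 hlog]
  · obtain ⟨i, B, hi, hBA, hB, hBcard, hstable⟩ := exists_subset_stable_sumset hAne hK2 hAK hη
    obtain ⟨b, -, hhalf⟩ := exists_half_popular_sub (M := K ^ 2 * A.card) hB (by positivity)
      ((Nat.cast_le.2 (Finset.card_le_card (Finset.sub_subset_sub hBA hBA))).trans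
        (card_sub_self_le hAne hAK))
    set Q := B.filter fun x ↦
      (B.card : ℝ) ^ 2 ≤ 2 * (K ^ 2 * A.card) * (B ∩ ((x - b) +ᵥ B)).card
    obtain ⟨L, hL, hcard⟩ := exists_subset_Span_of_almost_period (S := A + B) (Q := Q)
      (τ := K ^ (-(η / 2))) b (hAne.add hB) (by positivity)
      (Real.rpow_le_one_of_one_le_of_nonpos hK (by linarith)) fun x hx ↦
        (hstable (x - b) (Finset.mem_filter.1 hx).2).trans
          (by exact_mod_cast Finset.card_le_card (add_inter_vadd_subset A B (x - b)))
    refine ⟨L, ?_, hcard.trans ?_⟩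
    · have hsub : (Q : Set G) ⊆ ↑A ∩ Span L := Set.subset_inter
        (Finset.coe_subset.2 ((Finset.filter_subset _ _).trans hBA)) hL
      have hQcard : (Q.card : ℝ) ≤ (↑A ∩ Span L).ncard := by
        rw [← Set.ncard_coe_finset]
        exact_mod_cast Set.ncard_le_ncard hsub (A.finite_toSet.inter_of_left _)
      refine le_trans ?_ (hhalf.trans hQcard)
      have hsplit : K ^ (-(3 * (2 : ℝ) ^ i)) * K ^ 3 = K ^ (-(3 * ((2 : ℝ) ^ i - 1))) := by
        rw [← Real.rpow_natCast K, ← Real.rpow_add hK0]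
        congr 1
        push_cast
        ring
      have hK3 : 2 ≤ K ^ 3 := by nlinarith [sq_nonneg K]
      rw [← hsplit] at hBcard
      calc K ^ (-(3 * Real.exp (3 / η))) * A.card ≤ K ^ (-(3 * (2 : ℝ) ^ i)) * A.card := by
            gcongr
            exact two_pow_le_exp_three_div hη hi
        _ ≤ _ := by
            have : 0 ≤ K ^ (-(3 * (2 : ℝ) ^ i)) * A.card := by positivity
            nlinarith
    · have hτ : 48 / (K ^ (-(η / 2))) ^ 2 = 48 * K ^ η := by
        rw [← Real.rpow_natCast, ← Real.rpow_mul hK0.le, div_eq_mul_inv, ← Real.rpow_neg hK0.le]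
        congr 2
        push_cast
        ring
      have h1 := log_two_mul_card_add_le hA hB hBA
      have h2 : 0 ≤ K ^ η := by positivity
      rw [hτ]
      calc 48 * K ^ η * Real.log (2 * (A + B).card) ≤ 48 * K ^ η * (3 * Real.log A.card) := by
            gcongr
        _ ≤ _ := by nlinarith [mul_nonneg h2 hlog]
end

section
/- There exist a function E : ℕ → ℝ with E(r) ≥ 0 for all r, together with absolute constants c > 0 and r₀ ∈ ℕ such that E(r) ≥ c·log r for all r ≥ r₀, with the following property: for every finite field F and every integer r ≥ 3 there is a constant C = C(|F|, r) > 0 such that for every n ≥ 1, if a₁, …, a_r ∈ F∖{0} satisfy a₁ + ⋯ + a_r = 0 and A ⊆ F^n contains no solution to a₁·x₁ + ⋯ + a_r·x_r = 0 with x₁, …, x_r ∈ A pairwise distinct, then |A| ≤ C·|F|^n / n^{r−2+E(r)}. -/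
open Finset

/-- A system of `|E|` linear equations on `X → F` has a solution of support at least
`|X| - |E|`. -/
theorem exists_annihilator_large_support {F X E : Type*} [Field F] [Fintype X] [Fintype E]
    [DecidableEq F] (f : E → X → F) (k : ℕ) (hk : k + Fintype.card E ≤ Fintype.card X) :
    ∃ h : X → F, (∀ e, ∑ x, h x * f e x = 0) ∧ k ≤ Fintype.card {x // h x ≠ 0} := by
  classical
  induction k with
  | zero => exact ⟨0, by simp, by simp⟩
  | succ k ih =>
    obtain ⟨h, h0, hs⟩ := ih (by omega)
    rcases hs.lt_or_eq with hlt | heq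
    · exact ⟨h, h0, hlt⟩
    let Φ : (X → F) →ₗ[F] (E → F) × ({x // h x ≠ 0} → F) :=
      LinearMap.prod (LinearMap.pi fun e => ∑ x, f e x • LinearMap.proj x)
        (LinearMap.pi fun x => LinearMap.proj x.1)
    have hker : LinearMap.ker Φ ≠ ⊥ := by
      apply LinearMap.ker_ne_bot_of_finrank_lt
      rw [Module.finrank_prod, Module.finrank_fintype_fun_eq_card,
        Module.finrank_fintype_fun_eq_card, Module.finrank_fintype_fun_eq_card]
      omega
    obtain ⟨g, hg, hg0⟩ := (Submodule.ne_bot_iff _).1 hker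
    have hΦ : Φ g = 0 := hg
    have hg1 : ∀ e, ∑ x, g x * f e x = 0 := fun e => by
      have := congrFun (congrArg Prod.fst hΦ) e
      simpa [Φ, mul_comm] using this
    have hg2 : ∀ x, h x ≠ 0 → g x = 0 := fun x hx => by
      have := congrFun (congrArg Prod.snd hΦ) ⟨x, hx⟩
      simpa [Φ] using this
    refine ⟨h + g, fun e => ?_, ?_⟩
    · simp [add_mul, sum_add_distrib, h0, hg1]
    · obtain ⟨x₀, hx₀⟩ := Function.ne_iff.1 hg0
      have hh : h x₀ = 0 := by
        by_contra hne
        exact hx₀ (hg2 x₀ hne)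
      rw [Fintype.card_subtype] at heq ⊢
      rw [heq, Nat.succ_le_iff]
      apply card_lt_card
      rw [Finset.ssubset_iff_of_subset]
      · exact ⟨x₀, by simpa [hh] using hx₀, by simp [hh]⟩
      · intro x hx
        have hx' : h x ≠ 0 := by simpa using hx
        simpa [hg2 x hx'] using hx'

/-- The slice rank bound: a diagonal tensor on `X × X × X` that splits into three families of
slices indexed by `E` has size at most `3 |E|`. -/
theorem card_le_of_diagonal_slices {F X E : Type*} [Field F] [Fintype X] [DecidableEq X]
    [Fintype E] (f : E → X → F) (G H K : E → X → X → F)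
    (hT : ∀ x y z, (∑ e, f e x * G e y z + ∑ e, f e y * H e x z + ∑ e, f e z * K e x y) =
      if x = y ∧ y = z then 1 else 0) :
    Fintype.card X ≤ 3 * Fintype.card E := by
  classical
  by_contra! hlt
  obtain ⟨h, h0, hs⟩ := exists_annihilator_large_support f
    (Fintype.card X - Fintype.card E) (by omega)
  let U : Matrix X (E ⊕ E) F :=
    Matrix.of fun y => Sum.elim (fun e => f e y) (fun e => ∑ x, h x * K e x y)
  let V : Matrix (E ⊕ E) X F :=
    Matrix.of (Sum.elim (fun e z => ∑ x, h x * H e x z) (fun e z => f e z))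
  have hUV : Matrix.diagonal h = U * V := by
    ext y z
    have h1 : ∑ x, h x * (∑ e, f e x * G e y z + ∑ e, f e y * H e x z + ∑ e, f e z * K e x y) =
        Matrix.diagonal h y z := by
      simp_rw [hT, Matrix.diagonal_apply]
      by_cases hyz : y = z <;> simp [hyz]
    have h2 : ∑ x, h x * ∑ e, f e x * G e y z = 0 := by
      simp_rw [mul_sum]
      rw [sum_comm]
      refine sum_eq_zero fun e _ => ?_
      simp_rw [← mul_assoc]
      rw [← sum_mul, h0, zero_mul]
    rw [← h1, Matrix.mul_apply, Fintype.sum_sum_type]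
    simp only [mul_add, sum_add_distrib, h2, zero_add, U, V, Matrix.of_apply, Sum.elim_inl,
      Sum.elim_inr]
    congr 1
    · simp_rw [mul_sum]
      rw [sum_comm]
      exact sum_congr rfl fun e _ => sum_congr rfl fun x _ => by ring
    · simp_rw [mul_sum, sum_mul]
      rw [sum_comm]
      exact sum_congr rfl fun e _ => sum_congr rfl fun x _ => by ring
  have hr := (Matrix.rank_mul_le_left U V).trans U.rank_le_card_width
  rw [← hUV, Matrix.rank_diagonal, Fintype.card_sum] at hr
  omega

/-- Exponent vectors in `{0, …, q - 1}ⁿ` of degree at most a third of the maximum. -/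
def lowDegreeExponents (q n : ℕ) : Finset (Fin n → ℕ) :=
  {e ∈ Fintype.piFinset fun _ => range q | 3 * ∑ c, e c ≤ (q - 1) * n}

theorem exists_sum_pow_lt (q : ℕ) (hq : 2 ≤ q) :
    ∃ y : ℝ, 0 < y ∧ y < 1 ∧ ∑ j ∈ range q, (y ^ 3) ^ j < q * y ^ (q - 1) := by
  let g : ℝ → ℝ := fun y => ∑ j ∈ range q, y ^ (3 * j) - q * y ^ (q - 1)
  have hg : HasDerivAt g (∑ j ∈ range q, ((3 * j : ℕ) : ℝ) - q * (q - 1 : ℕ)) 1 := by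
    have h1 := (HasDerivAt.fun_sum (u := range q) (A := fun j (y : ℝ) => y ^ (3 * j))
      (fun j _ => hasDerivAt_pow (3 * j) (1 : ℝ))).fun_sub
      ((hasDerivAt_pow (q - 1) (1 : ℝ)).const_mul (q : ℝ))
    simpa [g] using h1
  have hpos : (0 : ℝ) < ∑ j ∈ range q, ((3 * j : ℕ) : ℝ) - q * (q - 1 : ℕ) := by
    have h2 : (∑ j ∈ range q, (3 * j)) * 2 = 3 * (q * (q - 1)) := by
      rw [← mul_sum, mul_assoc, sum_range_id_mul_two]
    have h3 : 0 < q * (q - 1) := Nat.mul_pos (by omega) (by omega)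
    have h4 : q * (q - 1) < ∑ j ∈ range q, (3 * j) := by omega
    rw [sub_pos]
    exact_mod_cast h4
  have hev : ∀ᶠ y in nhdsWithin (1 : ℝ) (Set.Iio 1), g y < g 1 := by
    have hs := (hasDerivAt_iff_tendsto_slope.1 hg).eventually (lt_mem_nhds hpos)
    have hs' : ∀ᶠ y in nhdsWithin (1 : ℝ) (Set.Iio 1), 0 < slope g 1 y :=
      nhdsWithin_mono (1 : ℝ) (fun y hy => ne_of_lt hy) hs
    filter_upwards [hs', self_mem_nhdsWithin] with y hy hy1
    rw [slope_def_field] at hy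
    have hy1 : y < 1 := hy1
    by_contra! hle
    exact absurd hy (not_lt.2 (div_nonpos_of_nonneg_of_nonpos (by linarith) (by linarith)))
  have hI : Set.Ioo (0 : ℝ) 1 ∈ nhdsWithin (1 : ℝ) (Set.Iio 1) := Ioo_mem_nhdsLT one_pos
  obtain ⟨y, hy, hy0, hy1⟩ := (hev.and hI).exists
  refine ⟨y, hy0, hy1, ?_⟩
  have hg1 : g 1 = 0 := by simp [g]
  rw [hg1, sub_neg] at hy
  simpa [pow_mul] using hy

theorem card_lowDegreeExponents_le (q : ℕ) (hq : 2 ≤ q) :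
    ∃ θ : ℝ, 0 < θ ∧ θ < 1 ∧ ∀ n, ((lowDegreeExponents q n).card : ℝ) ≤ (θ * q) ^ n := by
  obtain ⟨y, hy0, hy1, hy⟩ := exists_sum_pow_lt q hq
  have hq0 : (0 : ℝ) < q := by exact_mod_cast (by omega : 0 < q)
  set S := ∑ j ∈ range q, (y ^ 3) ^ j with hS
  have hSpos : 0 < S := sum_pos (fun j _ => by positivity) ⟨0, by simp; omega⟩
  refine ⟨S / (q * y ^ (q - 1)), by positivity, (div_lt_one (by positivity)).2 hy, fun n => ?_⟩
  have hrw : S / (q * y ^ (q - 1)) * q = S / y ^ (q - 1) := by field_simp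
  rw [hrw, div_pow, le_div_iff₀ (by positivity), ← nsmul_eq_mul, ← sum_const]
  calc ∑ e ∈ lowDegreeExponents q n, (y ^ (q - 1)) ^ n
      ≤ ∑ e ∈ lowDegreeExponents q n, ∏ c, (y ^ 3) ^ e c := by
        refine sum_le_sum fun e he => ?_
        rw [prod_pow_eq_pow_sum, ← pow_mul, ← pow_mul]
        exact pow_le_pow_of_le_one hy0.le hy1.le (mem_filter.1 he).2
    _ ≤ ∑ e ∈ Fintype.piFinset fun _ : Fin n => range q, ∏ c, (y ^ 3) ^ e c :=
        sum_le_sum_of_subset_of_nonneg (filter_subset _ _) fun _ _ _ => by positivity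
    _ = S ^ n := by
        rw [← prod_univ_sum]
        simp [hS]

theorem sum_mul_eq_sum_subtype_fiber {F ι κ : Type*} [CommSemiring F] [DecidableEq κ]
    (S : Finset ι) (L : Finset κ) (φ : ι → κ) (hφ : ∀ p ∈ S, φ p ∈ L) (m : κ → F) (w : ι → F) :
    ∑ p ∈ S, m (φ p) * w p = ∑ e : L, m e * ∑ p ∈ S with φ p = e, w p := by
  rw [sum_coe_sort L fun e => m e * ∑ p ∈ S with φ p = e, w p, ← sum_fiberwise_of_maps_to hφ]
  refine sum_congr rfl fun e _ => ?_
  rw [mul_sum]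
  exact sum_congr rfl fun p hp => by rw [(mem_filter.1 hp).2]

/-- The indicator function of a linear equation over `F`, as a product of polynomials in the
coordinates. -/
theorem prod_one_sub_pow_eq_ite {F ι : Type*} [Field F] [Fintype F] [Fintype ι] {n : ℕ}
    [DecidableEq F] (b : ι → F) (x : ι → Fin n → F) :
    ∏ c, (1 - (∑ i, b i * x i c) ^ (Fintype.card F - 1)) =
      if ∑ i, b i • x i = 0 then 1 else 0 := by
  have hq : Fintype.card F - 1 ≠ 0 := by
    have := Fintype.one_lt_card (α := F)
    omega
  split_ifs with h
  · refine prod_eq_one fun c _ => ?_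
    have hc : ∑ i, b i * x i c = 0 := by simpa using congrFun h c
    rw [hc, zero_pow hq, sub_zero]
  · obtain ⟨c, hc⟩ := Function.ne_iff.1 h
    refine prod_eq_zero (mem_univ c) ?_
    rw [FiniteField.pow_card_sub_one_eq_one _ (by simpa using hc), sub_self]

/-- The Ellenberg–Gijswijt bound for sets with only constant solutions to a three-term
equation. -/
theorem card_le_three_mul_card_lowDegreeExponents {F : Type*} [Field F] [Fintype F] {n : ℕ}
    (b : Fin 3 → F) (hb : ∑ i, b i = 0) (A : Finset (Fin n → F))
    (hA : ∀ x : Fin 3 → Fin n → F, (∀ i, x i ∈ A) → ∑ i, b i • x i = 0 →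
      x 0 = x 1 ∧ x 1 = x 2) :
    A.card ≤ 3 * (lowDegreeExponents (Fintype.card F) n).card := by
  classical
  set q := Fintype.card F with hq
  set L := lowDegreeExponents q n with hL
  have hq2 : 1 < q := Fintype.one_lt_card
  let P : MvPolynomial (Fin 3) F := 1 - (∑ i, MvPolynomial.C (b i) * MvPolynomial.X i) ^ (q - 1)
  have hdeg : P.totalDegree ≤ q - 1 := by
    refine (MvPolynomial.totalDegree_sub _ _).trans (max_le (by simp) ?_)
    refine (MvPolynomial.totalDegree_pow _ _).trans ?_
    refine (Nat.mul_le_mul_left _ (?_ : _ ≤ 1)).trans (mul_one _).le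
    refine MvPolynomial.totalDegree_finsetSum_le fun i _ => ?_
    refine (MvPolynomial.totalDegree_mul _ _).trans ?_
    simp
  have hsupp : ∀ d ∈ P.support, d 0 + d 1 + d 2 ≤ q - 1 := fun d hd => by
    have h := (MvPolynomial.le_totalDegree hd).trans hdeg
    rwa [Finsupp.sum_fintype _ _ (fun _ => rfl), Fin.sum_univ_three] at h
  let S : Finset (Fin n → Fin 3 →₀ ℕ) := Fintype.piFinset fun _ => P.support
  let w : (Fin n → Fin 3 →₀ ℕ) → F := fun p => ∏ c, P.coeff (p c)
  let mon : (Fin n → ℕ) → (Fin n → F) → F := fun e x => ∏ c, x c ^ e c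
  let φ : Fin 3 → (Fin n → Fin 3 →₀ ℕ) → Fin n → ℕ := fun i p c => p c i
  have hexp : ∀ x : Fin 3 → Fin n → F, (if ∑ i, b i • x i = 0 then (1 : F) else 0) =
      ∑ p ∈ S, w p * (mon (φ 0 p) (x 0) * mon (φ 1 p) (x 1) * mon (φ 2 p) (x 2)) := fun x => by
    rw [← prod_one_sub_pow_eq_ite]
    have hc : ∀ c, 1 - (∑ i, b i * x i c) ^ (q - 1) =
        ∑ d ∈ P.support, P.coeff d * ∏ i, x i c ^ d i := fun c => by
      rw [← MvPolynomial.eval_eq' (fun i => x i c) P]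
      simp [P]
    rw [prod_congr rfl fun c _ => hc c, prod_univ_sum]
    refine sum_congr rfl fun p _ => ?_
    simp only [Fin.prod_univ_three, prod_mul_distrib, w, mon, φ]
  have hlow : ∀ p ∈ S, φ 0 p ∈ L ∨ φ 1 p ∈ L ∨ φ 2 p ∈ L := fun p hp => by
    have hp' : ∀ c, p c 0 + p c 1 + p c 2 ≤ q - 1 :=
      fun c => hsupp _ (Fintype.mem_piFinset.1 hp c)
    have hsum : ∑ c, φ 0 p c + ∑ c, φ 1 p c + ∑ c, φ 2 p c ≤ (q - 1) * n := by
      rw [← sum_add_distrib, ← sum_add_distrib]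
      refine (sum_le_sum fun c _ => hp' c).trans ?_
      simp [mul_comm]
    have hmem : ∀ i, 3 * ∑ c, φ i p c ≤ (q - 1) * n → φ i p ∈ L := fun i hi => by
      refine mem_filter.2 ⟨Fintype.mem_piFinset.2 fun c => mem_range.2 ?_, hi⟩
      have := hp' c
      fin_cases i <;> simp only [φ] <;> simp <;> omega
    by_contra! hcon
    have h0 := mt (hmem 0) hcon.1
    have h1 := mt (hmem 1) hcon.2.1
    have h2 := mt (hmem 2) hcon.2.2
    omega
  let S₀ := S.filter fun p => φ 0 p ∈ L
  let S₁ := (S.filter fun p => φ 0 p ∉ L).filter fun p => φ 1 p ∈ L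
  let S₂ := (S.filter fun p => φ 0 p ∉ L).filter fun p => φ 1 p ∉ L
  have hS₂ : ∀ p ∈ S₂, φ 2 p ∈ L := fun p hp => by
    simp only [S₂, mem_filter] at hp
    have := hlow p hp.1.1
    tauto
  have key := card_le_of_diagonal_slices (X := A) (E := L) (fun e x => mon e x)
    (fun e y z => ∑ p ∈ S₀ with φ 0 p = e, w p * (mon (φ 1 p) y * mon (φ 2 p) z))
    (fun e x z => ∑ p ∈ S₁ with φ 1 p = e, w p * (mon (φ 0 p) x * mon (φ 2 p) z))
    (fun e x y => ∑ p ∈ S₂ with φ 2 p = e, w p * (mon (φ 0 p) x * mon (φ 1 p) y)) ?_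
  · simpa using key
  intro x y z
  have hiff : (x = y ∧ y = z) ↔ ∑ i, b i • (![x.1, y.1, z.1] : Fin 3 → Fin n → F) i = 0 := by
    constructor
    · rintro ⟨rfl, rfl⟩
      rw [Fin.sum_univ_three] at hb ⊢
      simp [← add_smul, hb]
    · intro h
      have := hA ![x.1, y.1, z.1] (fun i => by fin_cases i <;> simp) h
      exact ⟨Subtype.ext this.1, Subtype.ext this.2⟩
  simp only [hiff]
  rw [hexp ![x.1, y.1, z.1],
    ← sum_mul_eq_sum_subtype_fiber S₀ L (φ 0) (fun p hp => (mem_filter.1 hp).2) (mon · x)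
      (fun p => w p * (mon (φ 1 p) y * mon (φ 2 p) z)),
    ← sum_mul_eq_sum_subtype_fiber S₁ L (φ 1) (fun p hp => (mem_filter.1 hp).2) (mon · y)
      (fun p => w p * (mon (φ 0 p) x * mon (φ 2 p) z)),
    ← sum_mul_eq_sum_subtype_fiber S₂ L (φ 2) hS₂ (mon · z)
      (fun p => w p * (mon (φ 0 p) x * mon (φ 1 p) y)),
    ← sum_filter_add_sum_filter_not S (fun p => φ 0 p ∈ L),
    ← sum_filter_add_sum_filter_not (S.filter fun p => φ 0 p ∉ L) (fun p => φ 1 p ∈ L),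
    ← add_assoc]
  congr 1
  · congr 1 <;> exact sum_congr rfl fun p _ => by simp; ring
  · exact sum_congr rfl fun p _ => by simp; ring

/-- Every set of density at least `|F| ^ (-t)` in `Fⁿ`, where `k (t + 1) ≤ n`, contains a solution
to the equation with coefficients `a` in which `x i ≠ x j` for all `(i, j) ∈ S`. -/
def SolvableAvoiding {F ι : Type*} [Field F] [Fintype F] [Fintype ι] (a : ι → F)
    (S : Finset (ι × ι)) (k : ℕ) : Prop :=
  ∀ (n t : ℕ) (A : Finset (Fin n → F)), k * (t + 1) ≤ n →
    Fintype.card F ^ n ≤ A.card * Fintype.card F ^ t →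
    ∃ x : ι → Fin n → F, (∀ i, x i ∈ A) ∧ ∑ i, a i • x i = 0 ∧ ∀ p ∈ S, x p.1 ≠ x p.2

namespace SolvableAvoiding

variable {F ι : Type*} [Field F] [Fintype F] [Fintype ι] {a : ι → F}

theorem mono {S : Finset (ι × ι)} {k l : ℕ} (h : SolvableAvoiding a S k) (hkl : k ≤ l) :
    SolvableAvoiding a S l :=
  fun n t A hn hA => h n t A ((Nat.mul_le_mul_right _ hkl).trans hn) hA

/-- Solutions in a product of two spaces are distinct as soon as one of their components is. -/
theorem union [DecidableEq ι] {S T : Finset (ι × ι)} {k l : ℕ} (hS : SolvableAvoiding a S k)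
    (hT : SolvableAvoiding a T l) :
    SolvableAvoiding a (S ∪ T) (k * (2 * l * Fintype.card ι + 2) + 2 * l) := by
  classical
  intro n t A hn hA
  set q := Fintype.card F with hq
  have hq2 : 2 ≤ q := Fintype.one_lt_card
  set D := l * (t + 2) with hD
  obtain ⟨m, rfl⟩ : ∃ m, n = m + D := by
    refine ⟨n - D, (Nat.sub_add_cancel ?_).symm⟩
    refine le_trans ?_ hn
    rw [hD]
    nlinarith [Nat.zero_le (k * (2 * l * Fintype.card ι + 2) * (t + 1)), Nat.zero_le (l * t)]
  let fib : (Fin m → F) → Finset (Fin D → F) := fun u => {v | Fin.append u v ∈ A}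
  let U₀ : Finset (Fin m → F) := {u | q ^ D ≤ (fib u).card * q ^ (t + 1)}
  have hcard : A.card = ∑ u, (fib u).card := by
    rw [← card_sigma]
    refine (card_bij (fun s _ => Fin.append s.1 s.2) ?_ ?_ ?_).symm
    · intro s hs
      simpa [fib] using hs
    · rintro ⟨u, v⟩ _ ⟨u', v'⟩ _ h
      have := (Fin.appendEquiv m D).injective (a₁ := (u, v)) (a₂ := (u', v')) h
      simp_all
    · intro x hx
      obtain ⟨⟨u, v⟩, rfl⟩ := (Fin.appendEquiv m D).surjective x
      exact ⟨⟨u, v⟩, by simpa [fib, Fin.appendEquiv] using hx, rfl⟩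
  have hU₀ : q ^ m ≤ U₀.card * q ^ (t + 1) := by
    have h1 : A.card * q ^ (t + 1) ≤ U₀.card * q ^ D * q ^ (t + 1) + q ^ m * q ^ D := by
      rw [hcard, ← sum_filter_add_sum_filter_not univ (fun u => u ∈ U₀), add_mul]
      refine add_le_add (Nat.mul_le_mul_right _ ?_) ?_
      · rw [← smul_eq_mul, filter_mem_eq_inter, univ_inter]
        refine sum_le_card_nsmul _ _ _ fun u _ => (card_le_univ _).trans ?_
        simp [hq]
      · rw [sum_mul]
        refine (sum_le_card_nsmul _ _ (q ^ D) fun u hu => ?_).trans ?_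
        · simp only [U₀, mem_filter, mem_univ, true_and, not_le] at hu
          exact hu.le
        · rw [smul_eq_mul]
          refine Nat.mul_le_mul_right _ ((card_le_univ _).trans ?_)
          simp [hq]
    have h2 : 2 * (q ^ m * q ^ D) ≤ A.card * q ^ (t + 1) := by
      rw [← pow_add, pow_succ, ← mul_assoc, mul_comm]
      exact Nat.mul_le_mul hA hq2
    have h3 : q ^ m * q ^ D ≤ U₀.card * q ^ (t + 1) * q ^ D := by
      rw [mul_right_comm]
      omega
    exact Nat.le_of_mul_le_mul_right h3 (by positivity)
  have hsol : ∀ u, ∃ v : ι → Fin D → F, u ∈ U₀ →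
      (∀ i, v i ∈ fib u) ∧ ∑ i, a i • v i = 0 ∧ ∀ p ∈ T, v p.1 ≠ v p.2 := fun u => by
    by_cases hu : u ∈ U₀
    · obtain ⟨v, hv⟩ := hT D (t + 1) (fib u) (le_of_eq hD.symm) (mem_filter.1 hu).2
      exact ⟨v, fun _ => hv⟩
    · exact ⟨0, fun h => absurd h hu⟩
  choose v hv using hsol
  obtain ⟨v₀, hv₀⟩ : ∃ v₀, U₀.card ≤ (U₀.filter fun u => v u = v₀).card *
      q ^ (D * Fintype.card ι) := by
    by_contra! hcon
    have h1 : U₀.card = ∑ v₀, (U₀.filter fun u => v u = v₀).card :=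
      card_eq_sum_card_fiberwise fun _ _ => mem_coe.2 (mem_univ _)
    have h2 : U₀.card * q ^ (D * Fintype.card ι) <
        ∑ _v₀ : ι → Fin D → F, U₀.card := by
      conv_lhs => rw [h1, sum_mul]
      exact sum_lt_sum_of_nonempty univ_nonempty fun v₀ _ => hcon v₀
    rw [sum_const, smul_eq_mul, card_univ, Fintype.card_fun, Fintype.card_fun, ← pow_mul,
      Fintype.card_fin, mul_comm] at h2
    exact lt_irrefl _ h2
  set U := U₀.filter fun u => v u = v₀ with hU
  obtain ⟨u, huU, hu0, huS⟩ := hS m (D * Fintype.card ι + (t + 1)) U (by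
      have h1 : k * (D * Fintype.card ι + (t + 1) + 1) + D ≤
          (k * (2 * l * Fintype.card ι + 2) + 2 * l) * (t + 1) := by
        have hD2 : D ≤ 2 * l * (t + 1) := by rw [hD]; nlinarith [Nat.zero_le (l * t)]
        calc k * (D * Fintype.card ι + (t + 1) + 1) + D
            ≤ k * (2 * l * (t + 1) * Fintype.card ι + 2 * (t + 1)) + 2 * l * (t + 1) := by
              refine add_le_add (Nat.mul_le_mul_left _ ?_) hD2
              have := Nat.mul_le_mul_right (Fintype.card ι) hD2
              omega
          _ = _ := by ring
      omega) (by
      rw [pow_add, ← mul_assoc]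
      exact hU₀.trans (Nat.mul_le_mul_right _ hv₀))
  have hmem : ∀ i, u i ∈ U₀ ∧ v (u i) = v₀ := fun i => mem_filter.1 (huU i)
  have happ : ∀ i j, Fin.append (u i) (v₀ i) = Fin.append (u j) (v₀ j) →
      u i = u j ∧ v₀ i = v₀ j := fun i j h => by
    have := (Fin.appendEquiv m D).injective (a₁ := (u i, v₀ i)) (a₂ := (u j, v₀ j)) h
    simpa using this
  refine ⟨fun i => Fin.append (u i) (v₀ i), fun i => ?_, ?_, fun p hp heq => ?_⟩
  · have h := (hv (u i) (hmem i).1).1 i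
    rw [(hmem i).2] at h
    simpa [fib] using h
  · rcases isEmpty_or_nonempty ι with hι | ⟨⟨i₀⟩⟩
    · simp
    have hv0 : ∑ i, a i • v₀ i = 0 := (hmem i₀).2 ▸ (hv (u i₀) (hmem i₀).1).2.1
    funext c
    refine Fin.addCases (fun c => ?_) (fun c => ?_) c
    · simpa using congrFun hu0 c
    · simpa using congrFun hv0 c
  · rcases mem_union.1 hp with hp | hp
    · exact huS p hp (happ _ _ heq).1
    · have h := (hv (u p.1) (hmem p.1).1).2.2 p hp
      rw [(hmem p.1).2] at h
      exact h (happ _ _ heq).2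

/-- A solution to the equation obtained by identifying variables along `f` gives a solution to the
original equation. -/
theorem of_comp {κ : Type*} [Fintype κ] [DecidableEq κ] {b : κ → F} {T : Finset (κ × κ)} {k : ℕ}
    (h : SolvableAvoiding b T k) (f : ι → κ) (hf : ∀ c, ∑ i with f i = c, a i = b c)
    {S : Finset (ι × ι)} (hST : ∀ p ∈ S, (f p.1, f p.2) ∈ T) : SolvableAvoiding a S k := by
  intro n t A hn hA
  obtain ⟨y, hyA, hy0, hyT⟩ := h n t A hn hA
  refine ⟨fun i => y (f i), fun i => hyA _, ?_, fun p hp => hyT _ (hST p hp)⟩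
  rw [← hy0, ← sum_fiberwise univ f]
  refine sum_congr rfl fun c _ => ?_
  rw [← hf c, sum_smul]
  exact sum_congr rfl fun i hi => by simp only [(mem_filter.1 hi).2]

theorem three {F : Type*} [Field F] [Fintype F] :
    ∃ k, ∀ b : Fin 3 → F, (∀ i, b i ≠ 0) → ∑ i, b i = 0 →
      SolvableAvoiding b (univ.filter fun p => p.1 ≠ p.2) k := by
  set q := Fintype.card F with hq
  have hq2 : 2 ≤ q := Fintype.one_lt_card
  obtain ⟨θ, hθ0, hθ1, hθ⟩ := card_lowDegreeExponents_le q hq2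
  have hqR : (0 : ℝ) < q := by exact_mod_cast (by omega : 0 < q)
  obtain ⟨k, hk⟩ := exists_pow_lt_of_lt_one (show (0 : ℝ) < 1 / (3 * q) by positivity) hθ1
  refine ⟨k, fun b hb hb0 n t A hn hA => ?_⟩
  by_contra! hcon
  have hle := card_le_three_mul_card_lowDegreeExponents b hb0 A fun x hxA hx0 => by
    obtain ⟨p, hp, hxp⟩ := hcon x hxA hx0
    have hp : p.1 ≠ p.2 := (mem_filter.1 hp).2
    rw [Fin.sum_univ_three] at hb0 hx0
    have e0 : b 0 = -(b 1 + b 2) := by linear_combination hb0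
    have h01 : b 1 • (x 1 - x 0) + b 2 • (x 2 - x 0) = 0 := by
      rw [← hx0, e0]; module
    have hz : ∀ {c : F} {y z : Fin n → F}, c ≠ 0 → c • (y - z) = 0 → y = z :=
      fun hc h => sub_eq_zero.1 ((smul_eq_zero.1 h).resolve_left hc)
    have c1 : x 0 = x 1 → x 0 = x 1 ∧ x 1 = x 2 := fun h => by
      rw [← h, sub_self, smul_zero, zero_add] at h01
      exact ⟨h, h ▸ (hz (hb 2) h01).symm⟩
    have c2 : x 0 = x 2 → x 0 = x 1 ∧ x 1 = x 2 := fun h => by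
      rw [← h, sub_self, smul_zero, add_zero] at h01
      have := hz (hb 1) h01
      exact ⟨this.symm, this.trans h⟩
    have c3 : x 1 = x 2 → x 0 = x 1 ∧ x 1 = x 2 := fun h => by
      rw [← h, ← add_smul] at h01
      have hne : b 1 + b 2 ≠ 0 := fun h0 => hb 0 (by rw [e0, h0, neg_zero])
      exact ⟨(hz hne h01).symm, h⟩
    obtain ⟨i, j⟩ := p
    fin_cases i <;> fin_cases j <;> simp at hp hxp <;> first
      | exact c1 hxp | exact c2 hxp | exact c3 hxp
      | exact c1 hxp.symm | exact c2 hxp.symm | exact c3 hxp.symm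
  have h1 : (A.card : ℝ) ≤ 3 * (θ * q) ^ n :=
    le_trans (by exact_mod_cast hle) (mul_le_mul_of_nonneg_left (hθ n) (by norm_num))
  have h2 : θ ^ n < 1 / (3 * q) * (1 / q) ^ t := by
    calc θ ^ n ≤ θ ^ (k * (t + 1)) := pow_le_pow_of_le_one hθ0.le hθ1.le hn
      _ = (θ ^ k) ^ (t + 1) := pow_mul _ _ _
      _ < (1 / (3 * q)) ^ (t + 1) := by gcongr
      _ = 1 / (3 * q) * (1 / (3 * q)) ^ t := pow_succ' _ _
      _ ≤ 1 / (3 * q) * (1 / q) ^ t := by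
        gcongr
        linarith
  have h3 : ((q : ℝ)) ^ n ≤ A.card * (q : ℝ) ^ t := by exact_mod_cast hA
  have h4 : (A.card : ℝ) * q ^ t < (q : ℝ) ^ n := by
    calc (A.card : ℝ) * q ^ t ≤ 3 * (θ * q) ^ n * q ^ t := by gcongr
      _ = 3 * q ^ n * q ^ t * θ ^ n := by rw [mul_pow]; ring
      _ < 3 * q ^ n * q ^ t * (1 / (3 * q) * (1 / q) ^ t) := by gcongr
      _ = q ^ n * (1 / q) := by
        rw [one_div_pow]
        field_simp
      _ ≤ q ^ n * 1 := by
        gcongr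
        rw [div_le_one hqR]
        exact_mod_cast (by omega : 1 ≤ q)
      _ = _ := mul_one _
  linarith

/-- If the coefficients split into two zero-sum classes, any two distinct points give a solution
separating the classes. -/
theorem of_zero_sum_split (f : ι → Fin 2) (hf : ∀ c, ∑ i with f i = c, a i = 0)
    {S : Finset (ι × ι)} (hS : ∀ p ∈ S, f p.1 ≠ f p.2) : SolvableAvoiding a S 1 := by
  refine of_comp (b := 0) (T := univ.filter fun p => p.1 ≠ p.2) ?_ f hf fun p hp => by
    simpa using hS p hp
  intro n t A hn hA
  have hq2 : 2 ≤ Fintype.card F := Fintype.one_lt_card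
  have h1 : 1 < A.card := by
    by_contra! hle
    have : Fintype.card F ^ t < Fintype.card F ^ n := Nat.pow_lt_pow_right hq2 (by omega)
    have h2 := Nat.mul_le_mul_right (Fintype.card F ^ t) hle
    omega
  obtain ⟨x, hx, y, hy, hxy⟩ := one_lt_card.1 h1
  refine ⟨![x, y], fun i => by fin_cases i <;> simpa, by simp, ?_⟩
  rintro ⟨i, j⟩ hij
  fin_cases i <;> fin_cases j <;> simp_all [eq_comm]

theorem singleton_of_three [DecidableEq ι] {k : ℕ}
    (h3 : ∀ b : Fin 3 → F, (∀ i, b i ≠ 0) → ∑ i, b i = 0 →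
      SolvableAvoiding b (univ.filter fun p => p.1 ≠ p.2) k)
    (ha : ∀ i, a i ≠ 0) (ha0 : ∑ i, a i = 0) (hι : 3 ≤ Fintype.card ι) {i j : ι} (hij : i ≠ j) :
    SolvableAvoiding a {(i, j)} (k + 1) := by
  have merge : ∀ f : ι → Fin 3, (∀ c, ∑ i with f i = c, a i ≠ 0) → f i ≠ f j →
      SolvableAvoiding a {(i, j)} (k + 1) := fun f hf hfij =>
    (of_comp (h3 (fun c => ∑ i with f i = c, a i) hf (by rw [sum_fiberwise, ha0])) f
      (fun _ => rfl) fun p hp => by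
        rw [mem_singleton.1 hp]
        simpa using hfij).mono (Nat.le_succ k)
  have total : ∀ f : ι → Fin 3, ∑ i with f i = 2, a i =
      -(∑ i with f i = 0, a i + ∑ i with f i = 1, a i) := fun f => by
    have := sum_fiberwise univ f a
    rw [ha0, Fin.sum_univ_three] at this
    linear_combination this
  by_cases hs : a i + a j = 0
  · obtain ⟨l, hl⟩ : ∃ l, l ∉ ({i, j} : Finset ι) := by
      by_contra! hcon
      have h1 : Fintype.card ι ≤ ({i, j} : Finset ι).card :=
        card_le_card fun x _ => hcon x
      have h2 : ({i, j} : Finset ι).card ≤ 2 := card_le_two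
      omega
    simp only [mem_insert, mem_singleton, not_or] at hl
    obtain ⟨hli, hlj⟩ := hl
    by_cases hil : a i + a l = 0
    · let f : ι → Fin 2 := fun x => if x = i ∨ x = l then 0 else 1
      have h0 : ∑ x with f x = 0, a x = 0 := by
        have : (univ.filter fun x => f x = 0) = {i, l} := by
          ext x
          simp [f, or_iff_not_imp_left]
        rw [this, sum_pair (Ne.symm hli), hil]
      refine (of_zero_sum_split f (fun c => ?_) fun p hp => ?_).mono (Nat.le_add_left 1 k)
      · have := sum_fiberwise univ f a
        rw [ha0, Fin.sum_univ_two, h0, zero_add] at this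
        fin_cases c
        · exact h0
        · exact this
      · rw [mem_singleton.1 hp]
        simp [f, hij.symm, Ne.symm hlj]
    · let f : ι → Fin 3 := fun x => if x = i ∨ x = l then 0 else if x = j then 1 else 2
      have h0 : ∑ x with f x = 0, a x = a i + a l := by
        have : (univ.filter fun x => f x = 0) = {i, l} := by
          ext x
          simp only [f, mem_filter, mem_univ, true_and, mem_insert, mem_singleton]
          split_ifs <;> simp_all
        rw [this, sum_pair (Ne.symm hli)]
      have h1 : ∑ x with f x = 1, a x = a j := by
        have : (univ.filter fun x => f x = 1) = {j} := by
          ext x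
          simp only [f, mem_filter, mem_univ, true_and, mem_singleton]
          grind
        rw [this, sum_singleton]
      have h2 : ∑ x with f x = 2, a x = -a l := by
        rw [total, h0, h1]
        linear_combination -hs
      refine merge f (fun c => ?_) (by simp [f, hij.symm, Ne.symm hlj])
      fin_cases c
      · exact h0 ▸ hil
      · exact h1 ▸ ha j
      · exact h2 ▸ neg_ne_zero.2 (ha l)
  · let f : ι → Fin 3 := fun x => if x = i then 0 else if x = j then 1 else 2
    have h0 : ∑ x with f x = 0, a x = a i := by
      have : (univ.filter fun x => f x = 0) = {i} := by
        ext x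
        simp only [f, mem_filter, mem_univ, true_and, mem_singleton]
        split_ifs <;> simp_all
      rw [this, sum_singleton]
    have h1 : ∑ x with f x = 1, a x = a j := by
      have : (univ.filter fun x => f x = 1) = {j} := by
        ext x
        simp only [f, mem_filter, mem_univ, true_and, mem_singleton]
        split_ifs <;> simp_all
      rw [this, sum_singleton]
    refine merge f (fun c => ?_) (by simp [f, hij.symm])
    fin_cases c
    · exact h0 ▸ ha i
    · exact h1 ▸ ha j
    · exact (total f).trans (by rw [h0, h1]) ▸ neg_ne_zero.2 hs

theorem exists_offDiag [DecidableEq ι] (ha : ∀ i, a i ≠ 0) (ha0 : ∑ i, a i = 0)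
    (hι : 3 ≤ Fintype.card ι) : ∃ k, SolvableAvoiding a (univ : Finset ι).offDiag k := by
  obtain ⟨k₃, h3⟩ := three (F := F)
  suffices ∀ S : Finset (ι × ι), (∀ p ∈ S, p.1 ≠ p.2) → ∃ k, SolvableAvoiding a S k from
    this _ fun p hp => (mem_offDiag.1 hp).2.2
  intro S
  induction S using Finset.induction_on with
  | empty =>
    refine fun _ => ⟨0, fun n t A _ hA => ?_⟩
    have hq : 0 < Fintype.card F ^ n := pow_pos Fintype.card_pos n
    obtain ⟨x, hx⟩ := card_pos.1 (Nat.pos_of_mul_pos_right (hq.trans_le hA))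
    exact ⟨fun _ => x, fun _ => hx, by rw [← sum_smul, ha0, zero_smul], by simp⟩
  | insert p S _ ih =>
    intro hS
    obtain ⟨k, hk⟩ := ih fun p' hp' => hS p' (mem_insert_of_mem hp')
    rw [insert_eq]
    exact ⟨_, (singleton_of_three h3 ha ha0 hι (hS p (mem_insert_self p S))).union hk⟩

theorem exists_uniform (F ι : Type*) [Field F] [Fintype F] [Fintype ι] [DecidableEq ι]
    (hι : 3 ≤ Fintype.card ι) :
    ∃ k, ∀ a : ι → F, (∀ i, a i ≠ 0) → ∑ i, a i = 0 →
      SolvableAvoiding a (univ : Finset ι).offDiag k := by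
  classical
  have h : ∀ a : ι → F, ∃ k, (∀ i, a i ≠ 0) → ∑ i, a i = 0 →
      SolvableAvoiding a (univ : Finset ι).offDiag k := fun a => by
    by_cases ha : (∀ i, a i ≠ 0) ∧ ∑ i, a i = 0
    · obtain ⟨k, hk⟩ := exists_offDiag ha.1 ha.2 hι
      exact ⟨k, fun _ _ => hk⟩
    · exact ⟨0, fun h1 h2 => absurd ⟨h1, h2⟩ ha⟩
  choose k hk using h
  exact ⟨univ.sup k, fun a ha ha0 => (hk a ha ha0).mono (le_sup (mem_univ a))⟩

end SolvableAvoiding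

theorem exists_pow_le_mul_pow (s q : ℕ) (hq : 2 ≤ q) :
    ∃ C : ℝ, 0 < C ∧ ∀ m : ℕ, (m : ℝ) ^ s ≤ C * (q : ℝ) ^ m := by
  have hq1 : (1 : ℝ) < q := by exact_mod_cast hq
  obtain ⟨C, hC⟩ := (tendsto_pow_const_div_const_pow_of_one_lt s hq1).bddAbove_range
  refine ⟨max C 1, by positivity, fun m => ?_⟩
  rw [← div_le_iff₀ (by positivity)]
  exact (hC ⟨m, rfl⟩).trans (le_max_left _ _)

theorem improved_liu_spencer :
    ∃ E : ℕ → ℝ, (∀ r, 0 ≤ E r) ∧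
      ∃ c : ℝ, 0 < c ∧ ∃ r₀ : ℕ,
        (∀ r : ℕ, r₀ ≤ r → c * Real.log r ≤ E r) ∧
        ∀ (F : Type) [Field F] [Fintype F] (r : ℕ), 3 ≤ r →
          ∃ C : ℝ, 0 < C ∧
            ∀ (n : ℕ), 1 ≤ n →
              ∀ (a : Fin r → F), (∀ i, a i ≠ 0) → (∑ i, a i) = 0 →
                ∀ A : Finset (Fin n → F),
                  (¬ ∃ x : Fin r → Fin n → F,
                      (∀ i, x i ∈ A) ∧ Function.Injective x ∧ ∑ i, a i • x i = 0) →
                  (A.card : ℝ) ≤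
                    C * (Fintype.card F : ℝ) ^ n / (n : ℝ) ^ ((r : ℝ) - 2 + E r) := by
  refine ⟨fun r => r + 2, fun r => by positivity, 1, one_pos, 0, fun r _ => ?_, ?_⟩
  · have := Real.log_le_self (Nat.cast_nonneg (α := ℝ) r)
    linarith
  intro F _ _ r hr
  classical
  set q := Fintype.card F with hq
  have hq2 : 2 ≤ q := Fintype.one_lt_card
  have hqR : (0 : ℝ) < q := by exact_mod_cast (by omega : 0 < q)
  obtain ⟨k, hk⟩ := SolvableAvoiding.exists_uniform F (Fin r) (by simpa using hr)
  obtain ⟨C, hC0, hC⟩ := exists_pow_le_mul_pow (2 * r) q hq2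
  refine ⟨q ^ 2 * (k + 1) ^ (2 * r) * C, by positivity, fun n hn a ha ha0 A hA => ?_⟩
  have hexp : (r : ℝ) - 2 + (r + 2) = ((2 * r : ℕ) : ℝ) := by
    push_cast
    ring
  have hn0 : (0 : ℝ) < n := by exact_mod_cast hn
  rw [hexp, Real.rpow_natCast, le_div_iff₀ (by positivity)]
  set m := n / (k + 1) with hm
  have hAm : A.card * q ^ m ≤ q ^ (n + 1) := by
    rcases Nat.eq_zero_or_pos m with h0 | hpos
    · rw [h0, pow_zero, mul_one]
      refine (card_le_univ A).trans ?_
      rw [Fintype.card_fun, Fintype.card_fin]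
      exact Nat.pow_le_pow_right (by omega) (Nat.le_succ n)
    · by_contra! hlt
      obtain ⟨t, ht⟩ : ∃ t, m = t + 1 := ⟨m - 1, by omega⟩
      have hsol := ((hk a ha ha0).mono (Nat.le_succ k)) n t A
        (by rw [← ht]; exact Nat.mul_div_le n (k + 1)) (by
          rw [ht, pow_succ, pow_succ, ← mul_assoc] at hlt
          exact (Nat.lt_of_mul_lt_mul_right hlt).le)
      obtain ⟨x, hxA, hx0, hx⟩ := hsol
      refine hA ⟨x, hxA, fun i j hij => ?_, hx0⟩
      by_contra hne
      exact hx (i, j) (by simpa using hne) hij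
  have hnm : (n : ℝ) ≤ (k + 1) * (m + 1 : ℕ) := by
    have h : n < (k + 1) * (m + 1) := Nat.lt_mul_div_succ n (Nat.succ_pos k)
    exact_mod_cast h.le
  have hAm' : (A.card : ℝ) * q ^ m ≤ q ^ (n + 1) := by exact_mod_cast hAm
  calc (A.card : ℝ) * n ^ (2 * r)
      ≤ A.card * ((k + 1) * (m + 1 : ℕ)) ^ (2 * r) := by gcongr
    _ = A.card * (k + 1) ^ (2 * r) * ((m + 1 : ℕ) : ℝ) ^ (2 * r) := by rw [mul_pow, mul_assoc]
    _ ≤ A.card * (k + 1) ^ (2 * r) * (C * q ^ (m + 1)) := by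
        gcongr
        exact hC (m + 1)
    _ = (k + 1) ^ (2 * r) * C * q * (A.card * q ^ m) := by ring
    _ ≤ (k + 1) ^ (2 * r) * C * q * q ^ (n + 1) := by gcongr
    _ = _ := by ring
end

section
/- Let G be an abelian group, let A ⊆ G be a finite nonempty set, let A′ ⊆ A be nonempty, let θ ∈ (0,1], and set S := Sym_θ(A′ + A). Then θ·|A′ + A|·|S|·|A| ≤ |A′ + A + A|² · max_{x ∈ G} #{(p, s) ∈ A × S : p + s = x}. -/
open Pointwise

/-- The symmetry set of `A` at threshold `η`: those `x` with `|A ∩ (x + A)| ≥ η|A|`. -/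
noncomputable def symmSet {G : Type*} [AddCommGroup G] [DecidableEq G]
    (A : Finset G) (η : ℝ) : Finset G :=
  (A - A).filter fun x => η * A.card ≤ ((A ∩ A.image (x + ·)).card : ℝ)

open Finset in
/-- Double counting the triples `(a, s, b)` with `a ∈ A`, `s ∈ S` and `b ∈ B ∩ (s + B)` through the
map `(a, s, b) ↦ (b + a, b - s)`: if every element of `B + A - B` has at most `m` representations
as `a + s`, then every fibre has at most `m` elements. -/
lemma card_mul_sum_card_inter_image_le {G : Type*} [AddCommGroup G] [DecidableEq G]
    (A B S : Finset G) (m : ℕ)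
    (hm : ∀ c ∈ B + A, ∀ b ∈ B, #{p ∈ A ×ˢ S | p.1 + p.2 = c - b} ≤ m) :
    #A * ∑ s ∈ S, #(B ∩ B.image (s + ·)) ≤ m * (#(B + A) * #B) := by
  rw [← card_sigma, ← card_product, ← card_product]
  refine card_le_mul_card_image_of_maps_to (f := fun t => (t.2.2 + t.1, t.2.2 - t.2.1)) ?_ m ?_
  · rintro ⟨a, s, b⟩ h
    simp only [mem_product, mem_sigma, mem_inter, mem_image] at h ⊢
    obtain ⟨ha, -, hb, b', hb', rfl⟩ := h
    exact ⟨add_mem_add hb ha, by simpa using hb'⟩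
  · rintro ⟨c, b'⟩ h
    rw [mem_product] at h
    refine le_trans ?_ (hm c h.1 b' h.2)
    refine card_le_card_of_injOn (fun t => (t.1, t.2.1)) ?_ ?_
    · rintro ⟨a, s, b⟩ ht
      simp only [coe_filter, mem_product, mem_sigma, Set.mem_ofPred_eq, Prod.mk.injEq] at ht ⊢
      obtain ⟨⟨ha, hs, -⟩, rfl, rfl⟩ := ht
      exact ⟨⟨ha, hs⟩, by abel⟩
    · rintro ⟨a, s, b⟩ ht ⟨a₁, s₁, b₁⟩ ht₁ heq
      simp only [coe_filter, Set.mem_ofPred_eq, Prod.mk.injEq] at ht ht₁ heq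
      obtain ⟨rfl, rfl⟩ := heq
      obtain rfl : b = b₁ := add_right_cancel (ht.2.1.trans ht₁.2.1.symm)
      rfl

theorem symmetry_set_convolution_inequality
    (G : Type) [AddCommGroup G] [DecidableEq G] (A A' : Finset G) (θ : ℝ)
    (hA : A.Nonempty) (hA'sub : A' ⊆ A) (hA' : A'.Nonempty)
    (hθ0 : 0 < θ) (hθ1 : θ ≤ 1) :
    ∃ x : G,
      θ * ((A' + A).card : ℝ) * ((symmSet (A' + A) θ).card : ℝ) * (A.card : ℝ) ≤
        (((A' + A + A).card : ℝ)) ^ 2 *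
          (((A ×ˢ symmSet (A' + A) θ).filter fun p => p.1 + p.2 = x).card : ℝ) := by
  set B := A' + A
  set S := symmSet B θ
  have hB : B.Nonempty := hA'.add hA
  obtain ⟨q, -, hq⟩ := Finset.exists_max_image ((B + A) ×ˢ B)
    (fun q => ((A ×ˢ S).filter fun p => p.1 + p.2 = q.1 - q.2).card) ((hB.add hA).product hB)
  refine ⟨q.1 - q.2, ?_⟩
  set m := ((A ×ˢ S).filter fun p => p.1 + p.2 = q.1 - q.2).card
  have hcount : (A.card : ℝ) * ∑ s ∈ S, ((B ∩ B.image (s + ·)).card : ℝ) ≤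
      m * ((B + A).card * B.card) := by
    exact_mod_cast card_mul_sum_card_inter_image_le A B S m
      fun c hc b hb => hq (c, b) (Finset.mk_mem_product hc hb)
  have hsum : (S.card : ℝ) * (θ * B.card) ≤ ∑ s ∈ S, ((B ∩ B.image (s + ·)).card : ℝ) := by
    rw [← nsmul_eq_mul]
    exact Finset.card_nsmul_le_sum _ _ _ fun s hs => (Finset.mem_filter.1 hs).2
  have hBA : (B.card : ℝ) ≤ (B + A).card := by
    exact_mod_cast Finset.card_le_card_add_right hA
  calc θ * (B.card : ℝ) * S.card * A.card = A.card * (S.card * (θ * B.card)) := by ring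
    _ ≤ A.card * ∑ s ∈ S, ((B ∩ B.image (s + ·)).card : ℝ) := by gcongr
    _ ≤ m * ((B + A).card * B.card) := hcount
    _ ≤ m * ((B + A).card * (B + A).card) := by gcongr
    _ = ((B + A).card : ℝ) ^ 2 * m := by ring
end

section
/- There is an absolute constant C > 0 such that the following holds. Let G be an abelian group, let A ⊆ G be a finite set with |A| ≥ 2, and let K ≥ 1 be a real number with |A + A| ≤ K|A|. Then there is a finite set L ⊆ G such that A ⊆ Span(L) and |L| ≤ C·K·log|A|. -/
open Pointwise

/-- A finite set is ternary independent if its only vanishing combination with coefficients in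
`{-1, 0, 1}` is the trivial one. -/
def TernaryIndependent {G : Type*} [AddCommGroup G] (L : Finset G) : Prop :=
  ∀ σ : G → ℤ, (∀ x, σ x = -1 ∨ σ x = 0 ∨ σ x = 1) → ∑ x ∈ L, σ x • x = 0 → ∀ x ∈ L, σ x = 0

/-- Every finite set lies in the span of one of its ternary independent subsets. -/
lemma exists_ternaryIndependent_subset_span {G : Type*} [AddCommGroup G] (A : Finset G) :
    ∃ L ⊆ A, TernaryIndependent L ∧ (A : Set G) ⊆ Span L := by
  classical
  obtain ⟨L, hL, hmax⟩ := Finset.exists_max_image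
    (A.powerset.filter TernaryIndependent) Finset.card
    ⟨∅, by simp [TernaryIndependent]⟩
  simp only [Finset.mem_filter, Finset.mem_powerset] at hL hmax
  refine ⟨L, hL.1, hL.2, fun a ha ↦ ?_⟩
  by_cases haL : a ∈ L
  · exact ⟨fun x ↦ if x = a then 1 else 0, fun x ↦ by dsimp only; split_ifs <;> simp,
      by simp [ite_smul, haL]⟩
  have hdep : ¬ TernaryIndependent (insert a L) := fun h ↦ by
    have := hmax _ ⟨Finset.insert_subset ha hL.1, h⟩
    rw [Finset.card_insert_of_notMem haL] at this
    omega
  simp only [TernaryIndependent, not_forall] at hdep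
  obtain ⟨σ, hσ, hsum, x, hx, hσx⟩ := hdep
  rw [Finset.sum_insert haL] at hsum
  rcases hσ a with h | h | h
  · refine ⟨σ, hσ, ?_⟩
    rw [h] at hsum
    simpa [neg_add_eq_zero] using hsum
  · rw [h, zero_smul, zero_add] at hsum
    rcases Finset.mem_insert.1 hx with rfl | hx
    · exact absurd h hσx
    · exact absurd (hL.2 σ hσ hsum x hx) hσx
  · refine ⟨fun y ↦ -σ y, fun y ↦ by have := hσ y; dsimp only; omega, ?_⟩
    rw [h, one_smul] at hsum
    simpa using eq_neg_of_add_eq_zero_left hsum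

namespace AddMonoidAlgebra

variable {G : Type*} [AddCommGroup G]

/-- The involution of the real group algebra induced by negation on the group. -/
noncomputable def reflect : ℝ[G] →ₐ[ℝ] ℝ[G] :=
  (domCongr ℝ ℝ (AddEquiv.neg G)).toAlgHom

@[simp]
lemma coeff_reflect (u : ℝ[G]) (g : G) : (reflect u).coeff g = u.coeff (-g) := by
  simp [reflect, coeff_domCongr]

@[simp]
lemma reflect_single (g : G) (r : ℝ) : reflect (single g r) = single (-g) r := by
  simp [reflect]

/-- The coefficient at `0`, as a linear functional on the real group algebra. -/
noncomputable def coeffZero : ℝ[G] →ₗ[ℝ] ℝ where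
  toFun p := p.coeff 0
  map_add' _ _ := by simp
  map_smul' _ _ := by simp

lemma coeffZero_apply (p : ℝ[G]) : coeffZero p = p.coeff 0 := rfl

lemma coeffZero_mul_reflect_nonneg (u : ℝ[G]) : 0 ≤ coeffZero (u * reflect u) := by
  classical
  rw [coeffZero_apply, coeff_mul]
  refine Finset.sum_nonneg fun x _ ↦ Finset.sum_nonneg fun y _ ↦ ?_
  dsimp only
  split_ifs with h
  · rw [coeff_reflect, ← eq_neg_of_add_eq_zero_left h]
    exact mul_self_nonneg _
  · exact le_rfl

/-- The cosine `(e_g + e_{-g}) / 2` in the real group algebra. -/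
noncomputable def cosine (g : G) : ℝ[G] := (1 / 2 : ℝ) • (single g 1 + single (-g) 1)

/-- The Riesz product `∏_{g ∈ L} (1 + s cos g)` in the real group algebra. -/
noncomputable def riesz (s : ℝ) (L : Finset G) : ℝ[G] := ∏ g ∈ L, (1 + s • cosine g)

lemma single_mul_single_neg (g : G) : (single g 1 * single (-g) 1 : ℝ[G]) = 1 := by
  simp [one_def]

lemma one_add_single_mul_reflect (g : G) (u : ℝ[G]) :
    (1 + single g 1) * u * reflect ((1 + single g 1) * u) =
      (2 : ℝ) • (u * reflect u) + (2 : ℝ) • (u * reflect u * cosine g) := by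
  simp only [map_mul, map_add, map_one, reflect_single, cosine]
  linear_combination (norm := algebra) u * reflect u * single_mul_single_neg g

lemma one_sub_single_mul_reflect (g : G) (u : ℝ[G]) :
    (1 - single g 1) * u * reflect ((1 - single g 1) * u) =
      (2 : ℝ) • (u * reflect u) - (2 : ℝ) • (u * reflect u * cosine g) := by
  simp only [map_mul, map_sub, map_one, reflect_single, cosine]
  linear_combination (norm := algebra) u * reflect u * single_mul_single_neg g

lemma mul_reflect_mul_riesz_factor (s : ℝ) (g : G) (u p : ℝ[G]) :
    coeffZero (u * reflect u * ((1 + s • cosine g) * p)) =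
      (1 + s) / 4 * coeffZero
        ((1 + single g 1) * u * reflect ((1 + single g 1) * u) * p) +
      (1 - s) / 4 * coeffZero
        ((1 - single g 1) * u * reflect ((1 - single g 1) * u) * p) := by
  rw [one_add_single_mul_reflect, one_sub_single_mul_reflect, ← smul_eq_mul (a := (1 + s) / 4),
    ← smul_eq_mul (a := (1 - s) / 4), ← coeffZero.map_smul, ← coeffZero.map_smul, ← map_add]
  congr 1
  algebra

/-- The Riesz product acts as a positive semidefinite form. -/
lemma coeffZero_mul_riesz_nonneg {s : ℝ} (hs : 0 ≤ s) (hs' : s ≤ 1) (L : Finset G) :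
    ∀ u : ℝ[G], 0 ≤ coeffZero (u * reflect u * riesz s L) := by
  classical
  induction L using Finset.induction_on with
  | empty => intro u; simpa [riesz] using coeffZero_mul_reflect_nonneg u
  | insert g L hg ih =>
    intro u
    rw [riesz, Finset.prod_insert hg, ← riesz, mul_reflect_mul_riesz_factor]
    have h₁ := ih ((1 + single g 1) * u)
    have h₂ := ih ((1 - single g 1) * u)
    have : 0 ≤ 1 - s := by linarith
    positivity

/-- The Jensen inequality for the Riesz product, in tangent-line form. -/
lemma exp_mul_le_coeffZero_mul_riesz {s : ℝ} (hs : 0 ≤ s) (hs' : s ≤ 1 / 2) (L : Finset G) :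
    ∀ (u : ℝ[G]) (a : ℝ),
      Real.exp a * ((1 - a - 2 * s ^ 2 * L.card) * coeffZero (u * reflect u) +
        s * ∑ g ∈ L, coeffZero (u * reflect u * cosine g)) ≤
      coeffZero (u * reflect u * riesz s L) := by
  classical
  induction L using Finset.induction_on with
  | empty =>
    intro u a
    have h₁ := coeffZero_mul_reflect_nonneg u
    have h₂ : Real.exp a * (1 - a) ≤ 1 := by
      have := Real.add_one_le_exp (-a)
      calc Real.exp a * (1 - a) ≤ Real.exp a * Real.exp (-a) := by gcongr; linarith
        _ = 1 := by rw [← Real.exp_add]; simp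
    simpa [riesz, ← mul_assoc] using mul_le_mul_of_nonneg_right h₂ h₁
  | insert g L hg ih =>
    intro u a
    rw [riesz, Finset.prod_insert hg, ← riesz, mul_reflect_mul_riesz_factor,
      Finset.sum_insert hg, Finset.card_insert_of_notMem hg]
    have hp : 0 < 1 + s := by linarith
    have hm : 0 < 1 - s := by linarith
    have hlp : s - 2 * s ^ 2 ≤ Real.log (1 + s) := by
      refine le_trans ?_ (Real.one_sub_inv_le_log_of_pos hp)
      rw [← sub_nonneg]
      have : 1 - (1 + s)⁻¹ - (s - 2 * s ^ 2) = (s ^ 2 + 2 * s ^ 3) / (1 + s) := by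
        field_simp; ring
      rw [this]; positivity
    have hlm : -s - 2 * s ^ 2 ≤ Real.log (1 - s) := by
      refine le_trans ?_ (Real.one_sub_inv_le_log_of_pos hm)
      rw [← sub_nonneg]
      have : 1 - (1 - s)⁻¹ - (-s - 2 * s ^ 2) = s ^ 2 * (1 - 2 * s) / (1 - s) := by
        field_simp; ring
      rw [this]
      have : 0 ≤ 1 - 2 * s := by linarith
      positivity
    have h₁ := mul_le_mul_of_nonneg_left
      (ih ((1 + single g 1) * u) (a - Real.log (1 + s))) (by positivity : 0 ≤ (1 + s) / 4)
    have h₂ := mul_le_mul_of_nonneg_left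
      (ih ((1 - single g 1) * u) (a - Real.log (1 - s))) (by positivity : 0 ≤ (1 - s) / 4)
    have n₁ := coeffZero_mul_reflect_nonneg ((1 + single g 1) * u)
    have n₂ := coeffZero_mul_reflect_nonneg ((1 - single g 1) * u)
    refine le_trans ?_ (add_le_add h₁ h₂)
    rw [Real.exp_sub, Real.exp_sub, Real.exp_log hp, Real.exp_log hm]
    rw [one_add_single_mul_reflect] at n₁ ⊢
    rw [one_sub_single_mul_reflect] at n₂ ⊢
    simp only [add_mul, sub_mul,
      smul_mul_assoc, map_add, map_sub, map_smul, smul_eq_mul, Finset.sum_add_distrib,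
      Finset.sum_sub_distrib, ← Finset.mul_sum] at n₁ n₂ ⊢
    set X := coeffZero (u * reflect u)
    set Y := coeffZero (u * reflect u * cosine g)
    set S := ∑ x ∈ L, coeffZero (u * reflect u * cosine x)
    set T := ∑ x ∈ L, coeffZero (u * reflect u * cosine g * cosine x)
    set lp := Real.log (1 + s)
    set lm := Real.log (1 - s)
    have key : s * Y - 2 * s ^ 2 * X ≤ lp / 2 * (X + Y) + lm / 2 * (X - Y) := by
      nlinarith [mul_nonneg (sub_nonneg.2 hlp) n₁, mul_nonneg (sub_nonneg.2 hlm) n₂]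
    have := mul_le_mul_of_nonneg_left key (Real.exp_pos a).le
    rw [← sub_nonneg] at this ⊢
    refine this.trans_eq ?_
    push_cast
    field_simp
    ring

/-- The expansion of a Riesz product over the combinations with coefficients in `{-1, 0, 1}`. -/
lemma riesz_eq_sum [DecidableEq G] (s : ℝ) (L : Finset G) :
    riesz s L = ∑ x ∈ Fintype.piFinset (fun _ : L ↦ ({-1, 0, 1} : Finset ℤ)),
      single (∑ i : L, x i • (i : G)) (∏ i : L, if x i = 0 then 1 else s / 2) := by
  have hfactor (g : G) : 1 + s • cosine g =
      ∑ j ∈ ({-1, 0, 1} : Finset ℤ), single (j • g) (if j = 0 then (1 : ℝ) else s / 2) := by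
    simp only [cosine, one_def, smul_add, smul_single, smul_eq_mul, Finset.mem_insert,
      Finset.mem_singleton, Int.reduceNeg, neg_eq_zero, one_ne_zero, reduceCtorEq, or_self,
      not_false_eq_true, Finset.sum_insert, Finset.sum_singleton, neg_smul, one_smul, zero_smul,
      if_true, if_false, zero_ne_one, mul_one, mul_one_div]
    abel
  rw [riesz, ← Finset.prod_coe_sort]
  simp_rw [hfactor, Finset.prod_univ_sum, prod_single]

lemma coeff_riesz_nonneg {s : ℝ} (hs : 0 ≤ s) (L : Finset G) (g : G) :
    0 ≤ (riesz s L).coeff g := by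
  classical
  rw [riesz_eq_sum, coeff_sum, Finsupp.finsetSum_apply]
  refine Finset.sum_nonneg fun x _ ↦ ?_
  rw [coeff_single, Finsupp.single_apply]
  split_ifs
  · exact Finset.prod_nonneg fun i _ ↦ by split_ifs <;> positivity
  · exact le_rfl

lemma coeff_riesz_zero {L : Finset G} (hL : TernaryIndependent L) (s : ℝ) :
    (riesz s L).coeff 0 = 1 := by
  classical
  rw [riesz_eq_sum, coeff_sum, Finsupp.finsetSum_apply, Finset.sum_eq_single 0]
  · simp
  · intro x hx hx0
    rw [coeff_single, Finsupp.single_apply, if_neg]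
    intro hsum
    simp only [Fintype.mem_piFinset, Finset.mem_insert, Finset.mem_singleton] at hx
    refine hx0 (funext fun i ↦ ?_)
    have := hL (fun g ↦ if h : g ∈ L then x ⟨g, h⟩ else 0)
      (fun g ↦ by
        split_ifs
        · exact hx _
        · simp)
      (by rw [← hsum, ← Finset.sum_coe_sort]; simp) i i.2
    simpa using this
  · simp

lemma coeffZero_single_mul (g : G) (p : ℝ[G]) :
    coeffZero (single g 1 * p) = p.coeff (-g) := by
  rw [coeffZero_apply, coeff_single_mul_eq_mul_coeff (-g), one_mul]
  intro m _
  exact add_eq_zero_iff_eq_neg'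

lemma coeff_riesz_le_two {L : Finset G} (hL : TernaryIndependent L) {s : ℝ} (hs : 0 ≤ s)
    (hs' : s ≤ 1) (g : G) : (riesz s L).coeff g ≤ 2 := by
  have h := coeffZero_mul_riesz_nonneg hs hs' L ((1 - single g 1) * 1)
  rw [one_sub_single_mul_reflect] at h
  simp only [map_one, mul_one, one_mul, sub_mul, smul_mul_assoc, cosine, add_mul, map_sub,
    map_smul, map_add, coeffZero_single_mul, neg_neg, smul_eq_mul] at h
  rw [coeffZero_apply, coeff_riesz_zero hL] at h
  linarith [coeff_riesz_nonneg hs L (-g)]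

/-- The indicator of a finite set, as an element of the real group algebra. -/
noncomputable def indicator (X : Finset G) : ℝ[G] := ∑ x ∈ X, single x 1

lemma coeffZero_indicator_mul (X Y : Finset G) (p : ℝ[G]) :
    coeffZero (indicator X * reflect (indicator Y) * p) =
      ∑ x ∈ X, ∑ y ∈ Y, p.coeff (y - x) := by
  simp only [indicator, map_sum, reflect_single, Finset.sum_mul, Finset.mul_sum,
    single_mul_single, one_mul, coeffZero_single_mul]
  rw [Finset.sum_comm]
  simp [sub_eq_add_neg]

lemma coeffZero_indicator_mul_le {X Y : Finset G} {p : ℝ[G]} {c : ℝ}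
    (hp : ∀ g, p.coeff g ≤ c) :
    coeffZero (indicator X * reflect (indicator Y) * p) ≤ c * (X.card * Y.card) := by
  rw [coeffZero_indicator_mul]
  calc ∑ x ∈ X, ∑ y ∈ Y, p.coeff (y - x) ≤ ∑ x ∈ X, ∑ y ∈ Y, c := by gcongr; exact hp _
    _ = c * (X.card * Y.card) := by simp; ring

lemma coeffZero_indicator_mul_nonneg {X Y : Finset G} {p : ℝ[G]} (hp : ∀ g, 0 ≤ p.coeff g) :
    0 ≤ coeffZero (indicator X * reflect (indicator Y) * p) := by
  rw [coeffZero_indicator_mul]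
  exact Finset.sum_nonneg fun x _ ↦ Finset.sum_nonneg fun y _ ↦ hp _

lemma coeffZero_indicator_mul_reflect (X : Finset G) :
    coeffZero (indicator X * reflect (indicator X)) = X.card := by
  classical
  have h := coeffZero_indicator_mul X X 1
  rw [mul_one] at h
  rw [h]
  simp [one_def, Finsupp.single_apply, eq_comm (a := (0 : G)), sub_eq_zero]

lemma coeff_cosine_nonneg (g h : G) : 0 ≤ (cosine g).coeff h := by
  classical
  simp only [cosine, coeff_smul, coeff_add, coeff_single, Finsupp.smul_apply,
    Finsupp.add_apply, Finsupp.single_apply, smul_eq_mul]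
  split_ifs <;> norm_num

lemma half_le_coeff_cosine (g : G) : 1 / 2 ≤ (cosine g).coeff g := by
  classical
  simp only [cosine, coeff_smul, coeff_add, coeff_single, Finsupp.smul_apply,
    Finsupp.add_apply, Finsupp.single_apply, smul_eq_mul]
  split_ifs <;> norm_num

lemma half_card_le_coeffZero_indicator_mul_cosine [DecidableEq G] {A : Finset G} {g : G}
    (hg : g ∈ A) :
    (A.card : ℝ) / 2 ≤
      coeffZero (indicator A * reflect (indicator (A + A)) * cosine g) := by
  rw [coeffZero_indicator_mul]
  calc (A.card : ℝ) / 2 = ∑ x ∈ A, (1 / 2 : ℝ) := by simp; ring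
    _ ≤ ∑ x ∈ A, (cosine g).coeff ((x + g) - x) := by
      gcongr; simpa using half_le_coeff_cosine g
    _ ≤ _ := by
      gcongr with x hx
      exact Finset.single_le_sum (f := fun y ↦ (cosine g).coeff (y - x))
        (fun y _ ↦ coeff_cosine_nonneg _ _) (Finset.add_mem_add hx hg)

/-- A ternary independent subset of a set with doubling `K` has size `O(K log |A|)`. -/
lemma card_le_of_ternaryIndependent [DecidableEq G] {A L : Finset G} (hA : 2 ≤ A.card)
    (hLA : L ⊆ A) (hL : TernaryIndependent L) {K : ℝ} (hK : 1 ≤ K) (hKA : K ≤ A.card)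
    (hAA : ((A + A).card : ℝ) ≤ K * A.card) :
    (L.card : ℝ) ≤ 3584 * K * Real.log A.card := by
  obtain ⟨r, hr, rfl⟩ : ∃ r : ℝ, 1 ≤ r ∧ K = r ^ 2 :=
    ⟨√K, Real.one_le_sqrt.2 hK, (Real.sq_sqrt (by linarith)).symm⟩
  have hr0 : 0 < r := by linarith
  have ha : (2 : ℝ) ≤ A.card := by exact_mod_cast hA
  set s : ℝ := 1 / (32 * r) with hs_def
  have hs : 0 ≤ s := by positivity
  have hs' : s ≤ 1 / 2 := by
    rw [hs_def, div_le_div_iff₀ (by positivity) (by norm_num)]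
    linarith
  set u : ℝ[G] := indicator (A + A) + r • indicator A with hu
  have hexpand (p : ℝ[G]) : coeffZero (u * reflect u * p) =
      coeffZero (indicator (A + A) * reflect (indicator (A + A)) * p) +
      r * coeffZero (indicator (A + A) * reflect (indicator A) * p) +
      r * coeffZero (indicator A * reflect (indicator (A + A)) * p) +
      r ^ 2 * coeffZero (indicator A * reflect (indicator A) * p) := by
    simp only [← smul_eq_mul (α := ℝ), ← coeffZero.map_smul, ← coeffZero.map_add]
    congr 1
    simp only [hu, map_add, map_smul]
    algebra
  have hnorm_le : coeffZero (u * reflect u) ≤ 4 * r ^ 2 * A.card := by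
    have h := coeffZero_mul_reflect_nonneg (indicator (A + A) - r • indicator A)
    have hsum : u * reflect u + (indicator (A + A) - r • indicator A) *
        reflect (indicator (A + A) - r • indicator A) =
        (2 : ℝ) • (indicator (A + A) * reflect (indicator (A + A))) +
        (2 * r ^ 2) • (indicator A * reflect (indicator A)) := by
      simp only [hu, map_add, map_sub, map_smul]
      algebra
    have hsum' := congrArg coeffZero hsum
    simp only [map_add, map_smul, coeffZero_indicator_mul_reflect, smul_eq_mul] at hsum'
    linarith
  have hone (g : G) : 0 ≤ (1 : ℝ[G]).coeff g := by
    simp only [one_def, coeff_single, Finsupp.single_apply]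
    split_ifs <;> norm_num
  have hnorm_ge : 1 ≤ coeffZero (u * reflect u) := by
    have h := hexpand 1
    have h₁ := coeffZero_indicator_mul_nonneg (X := A + A) (Y := A + A) hone
    have h₂ := coeffZero_indicator_mul_nonneg (X := A + A) (Y := A) hone
    have h₃ := coeffZero_indicator_mul_nonneg (X := A) (Y := A + A) hone
    simp only [mul_one] at h h₁ h₂ h₃
    rw [coeffZero_indicator_mul_reflect A] at h
    nlinarith [mul_nonneg hr0.le h₂, mul_nonneg hr0.le h₃]
  have hcos : L.card * (r * A.card / 2) ≤ ∑ g ∈ L, coeffZero (u * reflect u * cosine g) := by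
    rw [← nsmul_eq_mul]
    refine Finset.card_nsmul_le_sum _ _ _ fun g hg ↦ ?_
    rw [hexpand]
    have h₁ := coeffZero_indicator_mul_nonneg (X := A + A) (Y := A + A) (coeff_cosine_nonneg g)
    have h₂ := coeffZero_indicator_mul_nonneg (X := A + A) (Y := A) (coeff_cosine_nonneg g)
    have h₃ := half_card_le_coeffZero_indicator_mul_cosine (hLA hg)
    have h₄ := coeffZero_indicator_mul_nonneg (X := A) (Y := A) (coeff_cosine_nonneg g)
    nlinarith [mul_nonneg hr0.le h₂, mul_le_mul_of_nonneg_left h₃ hr0.le,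
      mul_nonneg (sq_nonneg r) h₄]
  have hupper : coeffZero (u * reflect u * riesz s L) ≤ (A.card : ℝ) ^ 7 := by
    have hP := coeff_riesz_le_two hL hs (by linarith : s ≤ 1)
    have hrA : r * A.card ≤ r ^ 2 * A.card := by gcongr; nlinarith
    calc coeffZero (u * reflect u * riesz s L)
      _ ≤ 2 * ((A + A).card * (A + A).card) + r * (2 * ((A + A).card * A.card)) +
          r * (2 * (A.card * (A + A).card)) + r ^ 2 * (2 * (A.card * A.card)) := by
        rw [hexpand]
        gcongr <;> exact coeffZero_indicator_mul_le hP
      _ = 2 * ((A + A).card + r * A.card) ^ 2 := by ring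
      _ ≤ 2 * (r ^ 2 * A.card + r ^ 2 * A.card) ^ 2 := by gcongr
      _ ≤ 2 * ((A.card : ℝ) * A.card + A.card * A.card) ^ 2 := by gcongr
      _ = 2 ^ 3 * (A.card : ℝ) ^ 4 := by ring
      _ ≤ (A.card : ℝ) ^ 3 * (A.card : ℝ) ^ 4 := by gcongr
      _ = (A.card : ℝ) ^ 7 := by ring
  set x : ℝ := L.card / (512 * r ^ 2) with hx
  have hlower : Real.exp x ≤ coeffZero (u * reflect u * riesz s L) := by
    refine le_trans ?_ (exp_mul_le_coeffZero_mul_riesz hs hs' L u x)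
    refine le_mul_of_one_le_right (Real.exp_pos x).le ?_
    have h₁ : 2 * s ^ 2 * L.card = x := by
      rw [hs_def, hx]; field_simp; ring
    have h₂ : s * (L.card * (r * A.card / 2)) = 2 * x * (4 * r ^ 2 * A.card) := by
      rw [hs_def, hx]; field_simp; ring
    have h₃ : 2 * x * coeffZero (u * reflect u) ≤ 2 * x * (4 * r ^ 2 * A.card) := by
      gcongr
    rw [h₁]
    linarith [mul_le_mul_of_nonneg_left hcos hs]
  have hlog : x ≤ 7 * Real.log A.card := by
    have h := (Real.le_log_iff_exp_le (by positivity)).2 (hlower.trans hupper)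
    rwa [Real.log_pow, Nat.cast_ofNat] at h
  rw [hx, div_le_iff₀ (by positivity)] at hlog
  linarith

end AddMonoidAlgebra

theorem shkredov_span_theorem :
    ∃ C : ℝ, 0 < C ∧
      ∀ (G : Type) [AddCommGroup G] [DecidableEq G] (A : Finset G) (K : ℝ),
        2 ≤ A.card → 1 ≤ K → ((A + A).card : ℝ) ≤ K * A.card →
        ∃ L : Finset G,
          (↑A : Set G) ⊆ Span L ∧ (L.card : ℝ) ≤ C * K * Real.log A.card := by
  refine ⟨3584, by norm_num, fun G _ _ A K hA hK hAA ↦ ?_⟩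
  obtain ⟨L, hLA, hL, hspan⟩ := exists_ternaryIndependent_subset_span A
  refine ⟨L, hspan, ?_⟩
  have ha : (2 : ℝ) ≤ A.card := by exact_mod_cast hA
  have hAA' : ((A + A).card : ℝ) ≤ A.card * A.card := by exact_mod_cast Finset.card_add_le
  have hmin : ((A + A).card : ℝ) ≤ min K A.card * A.card := by
    rcases min_choice K (A.card : ℝ) with h | h <;> rwa [h]
  have hlog : 0 ≤ Real.log A.card := Real.log_nonneg (by linarith)
  refine (AddMonoidAlgebra.card_le_of_ternaryIndependent hA hLA hL
    (le_min hK (by linarith)) (min_le_right _ _) hmin).trans ?_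
  gcongr
  exact min_le_left _ _
end

section
/- There is an absolute constant C > 0 such that the following holds. Let G be an abelian group, let A ⊆ G be a finite nonempty set, let K ≥ 1 be a real number with |A + A| ≤ K|A|, and let ε ∈ (0,1). Then there is a nonempty subset A′ ⊆ A such that |Sym_{1−ε}(A′ + A)| ≥ exp(−K^{C/log(1/(1−ε))}·log K)·|A|. -/
open Pointwise

open Finset in
/-- The representation counts `|B ∩ (x + B)|` sum to `|B|²`. -/
lemma sum_card_inter_image_add {G : Type*} [AddCommGroup G] [DecidableEq G] (B : Finset G) :
    ∑ x ∈ B - B, #(B ∩ B.image (x + ·)) = #B ^ 2 := by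
  have hmaps : Set.MapsTo (fun p : G × G => p.1 - p.2) (B ×ˢ B : Finset (G × G))
      (B - B : Finset G) := by
    rintro ⟨a, b⟩ hab
    rw [mem_coe, mem_product] at hab
    exact sub_mem_sub hab.1 hab.2
  rw [sq, ← card_product, card_eq_sum_card_fiberwise hmaps]
  refine sum_congr rfl fun x _ => ?_
  rw [card_sub_eq, ← card_inter_vadd]
  rfl

open Finset in
/-- At least `|B| / 2` differences of `B` are popular, i.e. have at least half the average number of
representations. -/
lemma card_le_two_mul_card_popular_differences {G : Type*} [AddCommGroup G] [DecidableEq G]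
    (B : Finset G) :
    #B ≤ 2 * #{x ∈ B - B | #B ^ 2 ≤ 2 * #(B - B) * #(B ∩ B.image (x + ·))} := by
  obtain rfl | hB := B.eq_empty_or_nonempty
  · simp
  set X := {x ∈ B - B | #B ^ 2 ≤ 2 * #(B - B) * #(B ∩ B.image (x + ·))} with hX
  set Y := {x ∈ B - B | ¬ #B ^ 2 ≤ 2 * #(B - B) * #(B ∩ B.image (x + ·))} with hY
  have hsplit : ∑ x ∈ X, #(B ∩ B.image (x + ·)) + ∑ x ∈ Y, #(B ∩ B.image (x + ·)) = #B ^ 2 := by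
    rw [hX, hY, sum_filter_add_sum_filter_not, sum_card_inter_image_add]
  have hpopular : ∑ x ∈ X, #(B ∩ B.image (x + ·)) ≤ #X * #B :=
    sum_le_card_nsmul _ _ _ fun x _ => card_le_card inter_subset_left
  have hrare : 2 * #(B - B) * ∑ x ∈ Y, #(B ∩ B.image (x + ·)) ≤ #(B - B) * #B ^ 2 := by
    rw [mul_sum]
    calc _ ≤ #Y * #B ^ 2 :=
          sum_le_card_nsmul _ _ _ fun x hx => (not_le.1 (mem_filter.1 hx).2).le
      _ ≤ _ := by gcongr; exact filter_subset _ _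
  have hrare' : 2 * ∑ x ∈ Y, #(B ∩ B.image (x + ·)) ≤ #B ^ 2 :=
    Nat.le_of_mul_le_mul_left (by linarith) (hB.sub hB).card_pos
  exact Nat.le_of_mul_le_mul_left (by nlinarith) hB.card_pos

lemma mem_symmSet {G : Type*} [AddCommGroup G] [DecidableEq G] {S : Finset G} {η : ℝ} {x : G}
    (hη : 0 < η) (hS : S.Nonempty) (h : η * S.card ≤ ((S ∩ S.image (x + ·)).card : ℝ)) :
    x ∈ symmSet S η := by
  refine Finset.mem_filter.2 ⟨?_, h⟩
  have hpos : 0 < (S ∩ S.image (x + ·)).card := by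
    have : (0 : ℝ) < S.card := by exact_mod_cast hS.card_pos
    exact_mod_cast (mul_pos hη this).trans_le h
  obtain ⟨y, hy⟩ := Finset.card_pos.1 hpos
  obtain ⟨hyS, hy'⟩ := Finset.mem_inter.1 hy
  obtain ⟨z, hz, rfl⟩ := Finset.mem_image.1 hy'
  exact Finset.mem_sub.2 ⟨x + z, hyS, z, hz, by simp⟩

open Finset in
lemma card_inter_image_add_le {G : Type*} [AddCommGroup G] [DecidableEq G] (A B : Finset G)
    (x : G) :
    #((B ∩ B.image (x + ·)) + A) ≤ #((B + A) ∩ (B + A).image (x + ·)) := by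
  refine card_le_card fun y hy => ?_
  obtain ⟨b, hb, a, ha, rfl⟩ := mem_add.1 hy
  obtain ⟨hbB, hb'⟩ := mem_inter.1 hb
  obtain ⟨c, hc, rfl⟩ := mem_image.1 hb'
  exact mem_inter.2 ⟨add_mem_add hbB ha,
    mem_image.2 ⟨c + a, add_mem_add hc ha, (add_assoc _ _ _).symm⟩⟩

open Finset in
/-- Every subset `B` of a set `A` of doubling `K` either gives a large symmetry set for `B + A`, or
has a subset of controlled density whose sum with `A` is smaller by a factor `η`. -/
lemma symmSet_large_or_exists_subset {G : Type*} [AddCommGroup G] [DecidableEq G]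
    {A B : Finset G} {K η : ℝ} (hB : B.Nonempty) (hBA : B ⊆ A) (hK : 1 ≤ K)
    (hA : (#(A + A) : ℝ) ≤ K * #A) (hη : 0 < η) :
    (#B : ℝ) ≤ 2 * #(symmSet (B + A) η) ∨
      ∃ B' ⊆ B, (#B : ℝ) ^ 2 ≤ 2 * K ^ 2 * #A * #B' ∧ (#(B' + A) : ℝ) < η * #(B + A) := by
  rw [or_iff_not_imp_right]
  intro hno
  push Not at hno
  have hA0 : (0 : ℝ) < #A := by exact_mod_cast (hB.mono hBA).card_pos
  have hdiff : (#(B - B) : ℝ) ≤ K ^ 2 * #A := by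
    have hruzsa : (#(A - A) : ℝ) * #A ≤ #(A + A) * #(A + A) := by
      exact_mod_cast ruzsa_triangle_inequality_sub_add_add A A A
    have hmono : (#(B - B) : ℝ) ≤ #(A - A) := by
      exact_mod_cast card_le_card (sub_subset_sub hBA hBA)
    refine hmono.trans (le_of_mul_le_mul_right (hruzsa.trans ?_) hA0)
    calc (#(A + A) : ℝ) * #(A + A) ≤ (K * #A) * (K * #A) := by gcongr
      _ = _ := by ring
  have hsub : {x ∈ B - B | #B ^ 2 ≤ 2 * #(B - B) * #(B ∩ B.image (x + ·))} ⊆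
      symmSet (B + A) η := by
    intro x hx
    have hpop : (#B : ℝ) ^ 2 ≤ 2 * #(B - B) * #(B ∩ B.image (x + ·)) := by
      exact_mod_cast (mem_filter.1 hx).2
    refine mem_symmSet hη (hB.add (hB.mono hBA))
      ((hno (B ∩ B.image (x + ·)) inter_subset_left ?_).trans ?_)
    · refine hpop.trans ?_
      gcongr ?_ * _
      linarith
    · exact_mod_cast card_inter_image_add_le A B x
  exact_mod_cast (card_le_two_mul_card_popular_differences B).trans
    (Nat.mul_le_mul_left 2 (card_le_card hsub))

open Finset in
/-- Iterating `symmSet_large_or_exists_subset` `n` times. -/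
lemma exists_symmSet_large_or_exists_subset {G : Type*} [AddCommGroup G] [DecidableEq G]
    {A : Finset G} {K η : ℝ} (hAne : A.Nonempty) (hK : 1 ≤ K)
    (hA : (#(A + A) : ℝ) ≤ K * #A) (hη : 0 < η) (n : ℕ) :
    (∃ i < n, ∃ B ⊆ A, B.Nonempty ∧
        K ^ 2 * ((2 * K ^ 2)⁻¹) ^ 2 ^ i * #A ≤ #(symmSet (B + A) η)) ∨
      ∃ B ⊆ A, B.Nonempty ∧ 2 * K ^ 2 * ((2 * K ^ 2)⁻¹) ^ 2 ^ n * #A ≤ #B ∧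
        (#(B + A) : ℝ) ≤ η ^ n * K * #A := by
  have hA0 : (0 : ℝ) < #A := by exact_mod_cast hAne.card_pos
  have hK0 : 0 < K := by linarith
  induction n with
  | zero =>
    refine .inr ⟨A, Subset.rfl, hAne, le_of_eq ?_, by simpa using hA⟩
    rw [pow_zero, pow_one, mul_inv_cancel₀ (by positivity), one_mul]
  | succ n ih =>
    obtain ⟨i, hi, h⟩ | ⟨B, hBA, hB, hcard, hsum⟩ := ih
    · exact .inl ⟨i, hi.trans n.lt_succ_self, h⟩
    have hB0 : (0 : ℝ) < #B := by exact_mod_cast hB.card_pos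
    obtain hlarge | ⟨B', hB'B, hB', hsum'⟩ := symmSet_large_or_exists_subset hB hBA hK hA hη
    · exact .inl ⟨n, n.lt_succ_self, B, hBA, hB, by linarith⟩
    refine .inr ⟨B', hB'B.trans hBA, ?_, ?_, ?_⟩
    · rw [nonempty_iff_ne_empty]
      rintro rfl
      exact hB.ne_empty (by simpa using hB')
    · refine le_of_mul_le_mul_left (le_trans ?_ hB') (by positivity : 0 < 2 * K ^ 2 * (#A : ℝ))
      calc _ = (2 * K ^ 2 * ((2 * K ^ 2)⁻¹) ^ 2 ^ n * #A) ^ 2 := by ring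
        _ ≤ _ := by gcongr
    · calc (#(B' + A) : ℝ) ≤ η * #(B + A) := hsum'.le
        _ ≤ η * (η ^ n * K * #A) := by gcongr
        _ = _ := by ring

open Finset in
/-- If `A` has doubling at most `1 / η`, then every difference of `A` lies in `Sym_η(A + A)`. -/
lemma card_le_card_symmSet_of_mul_le_one {G : Type*} [AddCommGroup G] [DecidableEq G]
    {A : Finset G} {K η : ℝ} (hAne : A.Nonempty) (hA : (#(A + A) : ℝ) ≤ K * #A) (hη : 0 < η)
    (hηK : η * K ≤ 1) : #A ≤ #(symmSet (A + A) η) := by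
  refine (card_le_card_sub_right hAne).trans (card_le_card fun x hx => ?_)
  refine mem_symmSet hη (hAne.add hAne) ?_
  obtain ⟨a, ha, b, hb, rfl⟩ := mem_sub.1 hx
  have hne : (A ∩ A.image ((a - b) + ·)).Nonempty :=
    ⟨a, mem_inter.2 ⟨ha, mem_image.2 ⟨b, hb, sub_add_cancel a b⟩⟩⟩
  calc η * (#(A + A) : ℝ) ≤ η * (K * #A) := by gcongr
    _ = η * K * #A := by ring
    _ ≤ 1 * #A := by gcongr
    _ = #A := one_mul _
    _ ≤ _ := by
      exact_mod_cast (card_le_card_add_left hne).trans (card_inter_image_add_le A A (a - b))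

open Finset in
/-- If `A` has doubling less than `3 / 2`, then `A * A` is a coset of the subgroup `A / A`, so it is
invariant under every quotient of elements of `A`. -/
lemma mul_mem_mul_self_of_doubling_lt_three_halves {G : Type*} [CommGroup G] [DecidableEq G]
    {A : Finset G} (hA : #(A * A) < (3 / 2 : ℚ) * #A) {x y : G} (hx : x ∈ A / A)
    (hy : y ∈ A * A) : x * y ∈ A * A := by
  obtain ⟨a, ha, b, hb, rfl⟩ := mem_div.1 hx
  have hcoset (z : G) : z ∈ A * A ↔ z / a / a ∈ invMulSubgroup A hA := by
    rw [← smul_inv_mul_opSMul_eq_mul_of_doubling_lt_three_halves hA ha,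
      ← SetLike.mem_coe (A := Subgroup G), invMulSubgroup_eq_inv_mul, ← coe_mul, mem_coe,
      ← inv_smul_mem_iff, ← inv_smul_mem_iff]
    simp [div_eq_mul_inv, mul_comm a⁻¹]
  have hxH : a / b ∈ invMulSubgroup A hA := by
    rw [← SetLike.mem_coe, invMulSubgroup_eq_mul_inv, ← coe_mul, ← div_eq_mul_inv]
    exact hx
  rw [hcoset, mul_div_assoc, mul_div_assoc]
  exact mul_mem hxH ((hcoset y).1 hy)

open Finset in
lemma add_mem_add_self_of_doubling_lt_three_halves {G : Type*} [AddCommGroup G] [DecidableEq G]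
    {A : Finset G} (hA : #(A + A) < (3 / 2 : ℚ) * #A) {x y : G} (hx : x ∈ A - A)
    (hy : y ∈ A + A) : x + y ∈ A + A := by
  let e : G ↪ Multiplicative G := Multiplicative.ofAdd.toEmbedding
  have hadd : A.map e * A.map e = (A + A).map e := by
    ext z
    simp only [e, mem_mul, mem_map, mem_add]
    aesop
  have hsub : A.map e / A.map e = (A - A).map e := by
    ext z
    simp only [e, mem_div, mem_map, mem_sub]
    aesop
  have hmem : e x * e y ∈ A.map e * A.map e := by
    refine mul_mem_mul_self_of_doubling_lt_three_halves ?_ ?_ ?_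
    · rwa [hadd, card_map, card_map]
    · rw [hsub]
      exact mem_map_of_mem e hx
    · rw [hadd]
      exact mem_map_of_mem e hy
  rw [hadd] at hmem
  exact (mem_map' e).1 hmem

open Finset in
lemma card_le_card_symmSet_of_doubling_lt_three_halves {G : Type*} [AddCommGroup G]
    [DecidableEq G] {A : Finset G} {η : ℝ} (hAne : A.Nonempty)
    (hA : (#(A + A) : ℝ) < 3 / 2 * #A) (hη : 0 < η) (hη1 : η ≤ 1) :
    #A ≤ #(symmSet (A + A) η) := by
  have hA' : (#(A + A) : ℚ) < 3 / 2 * #A := by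
    rw [← Rat.cast_lt (K := ℝ)]
    push_cast
    exact hA
  refine (card_le_card_sub_right hAne).trans (card_le_card fun x hx => ?_)
  refine mem_symmSet hη (hAne.add hAne) ?_
  have himage : (A + A).image (x + ·) = A + A :=
    eq_of_subset_of_card_le
      (image_subset_iff.2 fun y hy => add_mem_add_self_of_doubling_lt_three_halves hA' hx hy)
      (card_image_of_injective _ (add_right_injective x)).ge
  rw [himage, inter_self]
  exact mul_le_of_le_one_left (Nat.cast_nonneg _) hη1

/-- The density after `i` steps of the iteration, for `i ≤ y` and `y ≥ 1`, beats the target. -/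
lemma exp_neg_le_iterated_density {K y : ℝ} {i : ℕ} (hK : 3 / 2 ≤ K) (hy : 1 ≤ y)
    (hi : (i : ℝ) ≤ y) :
    Real.exp (-(Real.exp (3 * y) * Real.log K)) ≤ K ^ 2 * ((2 * K ^ 2)⁻¹) ^ 2 ^ i := by
  have hK0 : 0 < K := by linarith
  have hlog : 0 ≤ Real.log K := Real.log_nonneg (by linarith)
  have htwo : (2 : ℝ) ≤ Real.exp 1 := by linarith [Real.add_one_le_exp (1 : ℝ)]
  have hexponent : 4 * (2 : ℝ) ^ i ≤ Real.exp (3 * y) := by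
    calc 4 * (2 : ℝ) ^ i = 2 ^ 2 * 2 ^ i := by norm_num
      _ ≤ Real.exp 1 ^ 2 * Real.exp 1 ^ i := by gcongr
      _ = Real.exp (2 + i) := by rw [← Real.exp_nat_mul, ← Real.exp_nat_mul, ← Real.exp_add]; simp
      _ ≤ _ := Real.exp_le_exp.2 (by linarith)
  calc Real.exp (-(Real.exp (3 * y) * Real.log K))
      ≤ Real.exp (-(4 * (2 : ℝ) ^ i * Real.log K)) := by gcongr
    _ = ((K ^ 4)⁻¹) ^ 2 ^ i := by
      rw [← Real.exp_log (by positivity : 0 < (K ^ 4)⁻¹), ← Real.exp_nat_mul, Real.log_inv,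
        Real.log_pow]
      push_cast
      congr 1
      ring
    _ ≤ ((2 * K ^ 2)⁻¹) ^ 2 ^ i := by
      gcongr
      nlinarith [mul_nonneg (sq_nonneg K) (by nlinarith : 0 ≤ K ^ 2 - 2)]
    _ ≤ _ := le_mul_of_one_le_left (by positivity) (by nlinarith)

theorem large_symmetry_set_from_small_doubling :
    ∃ C : ℝ, 0 < C ∧
      ∀ (G : Type) [AddCommGroup G] [DecidableEq G] (A : Finset G) (K ε : ℝ),
        A.Nonempty → 1 ≤ K → ((A + A).card : ℝ) ≤ K * A.card → 0 < ε → ε < 1 →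
        ∃ A' : Finset G, A' ⊆ A ∧ A'.Nonempty ∧
          Real.exp (-(K ^ (C / Real.log (1 / (1 - ε))) * Real.log K)) * A.card ≤
            ((symmSet (A' + A) (1 - ε)).card : ℝ) := by
  refine ⟨3, by norm_num, fun G _ _ A K ε hAne hK hA hε hε1 => ?_⟩
  have hη : 0 < 1 - ε := by linarith
  have hK0 : 0 < K := by linarith
  have hA0 : (0 : ℝ) < A.card := by exact_mod_cast hAne.card_pos
  have hlogK : 0 ≤ Real.log K := Real.log_nonneg hK
  have of_card_le (h : A.card ≤ (symmSet (A + A) (1 - ε)).card) :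
      ∃ A' : Finset G, A' ⊆ A ∧ A'.Nonempty ∧
        Real.exp (-(K ^ (3 / Real.log (1 / (1 - ε))) * Real.log K)) * A.card ≤
          ((symmSet (A' + A) (1 - ε)).card : ℝ) := by
    refine ⟨A, Finset.Subset.rfl, hAne, le_trans ?_ (Nat.cast_le.2 h)⟩
    refine mul_le_of_le_one_left hA0.le (Real.exp_le_one_iff.2 ?_)
    exact neg_nonpos.2 (by positivity)
  obtain hηK | hηK := le_or_gt ((1 - ε) * K) 1
  · exact of_card_le (card_le_card_symmSet_of_mul_le_one hAne hA hη hηK)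
  obtain hK32 | hK32 := lt_or_ge K (3 / 2)
  · exact of_card_le (card_le_card_symmSet_of_doubling_lt_three_halves hAne
      (hA.trans_lt (by gcongr)) hη (by linarith))
  set L := Real.log (1 / (1 - ε)) with hL
  have hLη : Real.log (1 - ε) = -L := by rw [hL, one_div, Real.log_inv, neg_neg]
  have hL0 : 0 < L := by linarith [Real.log_neg hη (by linarith)]
  set y := Real.log K / L with hy
  have hyL : y * L = Real.log K := div_mul_cancel₀ _ hL0.ne'
  have hy1 : 1 ≤ y := by
    rw [hy, one_le_div hL0]
    have := Real.log_pos hηK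
    rw [Real.log_mul hη.ne' hK0.ne'] at this
    linarith
  have hpow : K ^ (3 / L) = Real.exp (3 * y) := by
    rw [Real.rpow_def_of_pos hK0, hy]
    ring_nf
  obtain ⟨i, hi, B, hBA, hB, hcard⟩ | ⟨B, hBA, hB, -, hsum⟩ :=
    exists_symmSet_large_or_exists_subset hAne hK hA hη (⌊y⌋₊ + 1)
  · refine ⟨B, hBA, hB, le_trans ?_ hcard⟩
    rw [hpow]
    gcongr
    exact exp_neg_le_iterated_density hK32 hy1
      ((Nat.le_floor_iff (by linarith)).1 (Nat.lt_succ_iff.1 hi))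
  · exfalso
    have hlt : (1 - ε) ^ (⌊y⌋₊ + 1) * K < 1 := by
      rw [← Real.log_neg_iff (by positivity), Real.log_mul (by positivity) hK0.ne', Real.log_pow,
        hLη]
      push_cast
      nlinarith [Nat.lt_floor_add_one y]
    have hle : (A.card : ℝ) ≤ (B + A).card := by
      exact_mod_cast Finset.card_le_card_add_left hB
    nlinarith
end
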